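/- For every a ∈ [0, 1/2) and every bounded open set A ⊂ ℝ^d, almost surely sup_{t ≥ 0} ( sup_{x ∈ A} X_t(x) − √(2d)·t + (a/√(2d))·ln(t+1) ) < ∞. -/

import Mathlib

open MeasureTheory ProbabilityTheory Filter

noncomputable section



lemma gauss_sum_law {Ω : Type*} [MeasurableSpace Ω] {μ : Measure Ω} [IsProbabilityMeasure μ]
    {ξ : ℕ → Ω → ℝ} (hm : ∀ i, Measurable (ξ i)) (hi : iIndepFun ξ μ)
    (hg : ∀ i, μ.map (ξ i) = gaussianReal 0 1) (s : Finset ℕ) :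
    μ.map (fun ω => ∑ i ∈ s, ξ i ω) = gaussianReal 0 (s.card : NNReal) := by
  induction s using Finset.induction_on with
  | empty => simp [Measure.map_const]
  | insert a s ha ih =>
    have h1 : IndepFun (∑ i ∈ s, ξ i) (ξ a) μ := hi.indepFun_finsetSum_of_notMem hm ha
    have h2 := gaussianReal_add_gaussianReal_of_indepFun (m₁ := 0) (m₂ := 0)
      (v₁ := 1) (v₂ := (s.card : NNReal)) h1.symm (hg a)
      (by rw [← ih]; congr 1; ext ω; simp)
    rw [Finset.card_insert_of_notMem ha]
    convert h2 using 2
    · ext ω; simp [Finset.sum_insert ha]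
    · simp
    · push_cast; ring

lemma gauss_interval (v : NNReal) (hv : v ≠ 0) (c l : ℝ) (hl : 0 ≤ l) :
    (gaussianReal 0 v).real (Set.Icc c (c + l)) ≤ l / Real.sqrt v := by
  have hv' : (0:ℝ) < v := by exact_mod_cast pos_iff_ne_zero.mpr hv
  rw [measureReal_def, gaussianReal_apply_eq_integral 0 hv]
  have hb : ∀ x, gaussianPDFReal 0 v x ≤ 1 / Real.sqrt v := by
    intro x
    rw [gaussianPDFReal_def]
    have h1 : Real.exp (-(x - 0) ^ 2 / (2 * v)) ≤ 1 := by
      rw [Real.exp_le_one_iff]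
      apply div_nonpos_of_nonpos_of_nonneg
      · nlinarith [sq_nonneg (x - 0)]
      · positivity
    have h2 : (Real.sqrt (2 * Real.pi * v))⁻¹ ≤ 1 / Real.sqrt v := by
      rw [one_div]
      apply inv_anti₀ (Real.sqrt_pos.mpr hv')
      apply Real.sqrt_le_sqrt
      nlinarith [Real.pi_gt_three]
    calc _ ≤ (Real.sqrt (2 * Real.pi * v))⁻¹ * 1 :=
        mul_le_mul_of_nonneg_left h1 (by positivity)
      _ ≤ _ := by simpa using h2
  have hnn : 0 ≤ ∫ x in Set.Icc c (c + l), gaussianPDFReal 0 v x :=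
    integral_nonneg fun x => gaussianPDFReal_nonneg _ _ _
  rw [ENNReal.toReal_ofReal hnn]
  calc _ ≤ ∫ x in Set.Icc c (c + l), 1 / Real.sqrt v :=
        integral_mono (integrable_gaussianPDFReal _ _).integrableOn
          (by simp) hb
    _ = _ := by simp [hl]; ring

lemma gauss_tail {Ω : Type*} [MeasurableSpace Ω] {μ : Measure Ω} [IsProbabilityMeasure μ]
    {Y : Ω → ℝ} (hg : μ.map Y = gaussianReal 0 1) (b : ℝ) (hb : 0 ≤ b) :
    μ.real {ω | b ≤ Y ω} ≤ Real.exp (-b ^ 2 / 2) := by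
  have hY : AEMeasurable Y μ := by
    by_contra h
    rw [Measure.map_of_not_aemeasurable h] at hg
    exact (IsProbabilityMeasure.ne_zero (gaussianReal 0 1)) hg.symm
  have hIntg : Integrable (fun ω => Real.exp (b * Y ω)) μ := by
    have := integrable_exp_mul_gaussianReal (μ := 0) (v := 1) b
    rw [← hg] at this
    exact (integrable_map_measure (by fun_prop) hY).mp this
  have := measure_ge_le_exp_mul_mgf (μ := μ) (X := Y) b hb hIntg
  rw [mgf_gaussianReal hg] at this
  refine this.trans (le_of_eq ?_)
  rw [← Real.exp_add]; congr 1; push_cast; ring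

lemma indep_trunc {Ω : Type*} [MeasurableSpace Ω] {μ : Measure Ω}
    {ξ : ℕ → Ω → ℝ} (hm : ∀ i, Measurable (ξ i)) (hi : iIndepFun ξ μ) (S T : Finset ℕ)
    (hST : Disjoint S T) :
    IndepFun (fun ω (i : ℕ) => if i ∈ S then ξ i ω else 0)
      (fun ω (i : ℕ) => if i ∈ T then ξ i ω else 0) μ := by
  have h := hi.indepFun_finset S T hST hm
  have hφ : ∀ U : Finset ℕ, Measurable (fun (x : U → ℝ) (i : ℕ) =>
      if h : i ∈ U then x ⟨i, h⟩ else 0) := by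
    intro U
    rw [measurable_pi_iff]
    intro i
    by_cases hi : i ∈ U
    · simp only [hi, dite_true]; exact measurable_pi_apply _
    · simp only [hi, dite_false]; exact measurable_const
  have h2 := h.comp (hφ S) (hφ T)
  have e : ∀ U : Finset ℕ, (fun ω (i : ℕ) => if i ∈ U then ξ i ω else 0) =
      (fun (x : U → ℝ) (i : ℕ) => if h : i ∈ U then x ⟨i, h⟩ else 0) ∘
        (fun a (i : U) => ξ i a) := by
    intro U; funext ω i; simp
  rw [e S, e T]
  exact h2

lemma meas_forall_le {α : Type*} [MeasurableSpace α] (f : ℕ → α → ℝ) (hf : ∀ k, Measurable (f k))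
    (j : ℕ) (L : ℝ) : MeasurableSet {x | ∀ k ≤ j, f k x ≤ L} := by
  have : {x | ∀ k ≤ j, f k x ≤ L} = ⋂ k, ⋂ (_ : k ≤ j), {x | f k x ≤ L} := by
    ext x; simp
  rw [this]
  exact MeasurableSet.iInter fun k => MeasurableSet.iInter fun _ =>
    measurableSet_le (hf k) measurable_const

lemma indep_sets {Ω : Type*} [MeasurableSpace Ω] {μ : Measure Ω}
    {ξ : ℕ → Ω → ℝ} (hm : ∀ i, Measurable (ξ i)) (hi : iIndepFun ξ μ) (S T : Finset ℕ)
    (hST : Disjoint S T) {B C : Set (ℕ → ℝ)} (hB : MeasurableSet B) (hC : MeasurableSet C)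
    (hBS : ∀ x : ℕ → ℝ, (fun i => if i ∈ S then x i else 0) ∈ B ↔ x ∈ B)
    (hCT : ∀ x : ℕ → ℝ, (fun i => if i ∈ T then x i else 0) ∈ C ↔ x ∈ C) :
    μ.real {ω | (fun i => ξ i ω) ∈ B ∧ (fun i => ξ i ω) ∈ C} =
      μ.real {ω | (fun i => ξ i ω) ∈ B} * μ.real {ω | (fun i => ξ i ω) ∈ C} := by
  have h := (indep_trunc hm hi S T hST).measure_inter_preimage_eq_mul B C hB hC
  have e1 : (fun ω (i : ℕ) => if i ∈ S then ξ i ω else 0) ⁻¹' B = {ω | (fun i => ξ i ω) ∈ B} := by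
    ext ω; exact hBS _
  have e2 : (fun ω (i : ℕ) => if i ∈ T then ξ i ω else 0) ⁻¹' C = {ω | (fun i => ξ i ω) ∈ C} := by
    ext ω; exact hCT _
  rw [e1, e2] at h
  simp only [measureReal_def, ← ENNReal.toReal_mul, ← h]
  rfl

lemma one_sided {Ω : Type*} [MeasurableSpace Ω] {μ : Measure Ω} [IsProbabilityMeasure μ]
    {ξ : ℕ → Ω → ℝ} (hm : ∀ i, Measurable (ξ i)) (hi : iIndepFun ξ μ)
    (hg : ∀ i, μ.map (ξ i) = gaussianReal 0 1) (m : ℕ) (hm0 : 1 ≤ m) (L b : ℝ) (hL : 0 ≤ L)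
    (hb : 0 < b) :
    μ.real {ω | ∀ k ≤ m, ∑ i ∈ Finset.range k, ξ i ω ≤ L} ≤
      (2 * L + 2 * b) / Real.sqrt m + m * Real.exp (- b ^ 2 / 2) := by
  set S : ℕ → Ω → ℝ := fun k ω => ∑ i ∈ Finset.range k, ξ i ω with hS
  have hSm : ∀ k, Measurable (S k) := fun k => by
    simp only [hS]; exact Finset.measurable_sum _ (fun i _ => hm i)
  set R : ℕ → Ω → ℝ := fun j ω => ∑ i ∈ Finset.Ico (j + 1) m, ξ i ω with hR
  have hRm : ∀ k, Measurable (R k) := fun k => by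
    simp only [hR]; exact Finset.measurable_sum _ (fun i _ => hm i)
  have hRS : ∀ j < m, ∀ ω, S m ω = S (j + 1) ω + R j ω := by
    intro j hj ω
    simp only [hS, hR]
    rw [Finset.sum_range_add_sum_Ico _ (by omega : j + 1 ≤ m)]
  set Tj : ℕ → Set Ω := fun j => {ω | L < S (j + 1) ω ∧ ∀ k ≤ j, S k ω ≤ L} with hT
  set Gj : ℕ → Set Ω := fun j => {ω | L < S (j + 1) ω ∧ (∀ k ≤ j, S k ω ≤ L) ∧ ξ j ω ≤ b} with hG
  -- symmetry
  have hsymm : ∀ j < m, μ.real (Gj j ∩ {ω | R j ω ≤ -b}) = μ.real (Gj j ∩ {ω | b ≤ R j ω}) := by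
    intro j hj
    set B : Set (ℕ → ℝ) := {x | L < ∑ i ∈ Finset.range (j+1), x i ∧
      (∀ k ≤ j, ∑ i ∈ Finset.range k, x i ≤ L) ∧ x j ≤ b} with hB
    have hBm : MeasurableSet B := by
      have h1 : ∀ k, Measurable (fun x : ℕ → ℝ => ∑ i ∈ Finset.range k, x i) := fun k =>
        Finset.measurable_sum _ (fun i _ => measurable_pi_apply i)
      refine (measurableSet_lt measurable_const (h1 _)).inter (MeasurableSet.inter ?_ ?_)
      · exact meas_forall_le _ h1 j L
      · exact measurableSet_le (measurable_pi_apply j) measurable_const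
    have hBS : ∀ x : ℕ → ℝ, (fun i => if i ∈ Finset.range (j+1) then x i else 0) ∈ B ↔ x ∈ B := by
      intro x
      have h1 : ∀ k ≤ j + 1, ∑ i ∈ Finset.range k, (if i ∈ Finset.range (j+1) then x i else 0) =
          ∑ i ∈ Finset.range k, x i := by
        intro k hk
        apply Finset.sum_congr rfl
        intro i hi
        rw [if_pos]; simp at hi ⊢; omega
      simp only [hB, Set.mem_ofPred_eq]
      rw [h1 _ le_rfl, if_pos (by simp)]
      constructor
      · rintro ⟨a1, a2, a3⟩
        exact ⟨a1, fun k hk => by rw [← h1 k (by omega)]; exact a2 k hk, a3⟩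
      · rintro ⟨a1, a2, a3⟩
        exact ⟨a1, fun k hk => by rw [h1 k (by omega)]; exact a2 k hk, a3⟩
    have hCm : Measurable (fun x : ℕ → ℝ => ∑ i ∈ Finset.Ico (j+1) m, x i) :=
        Finset.measurable_sum _ (fun i _ => measurable_pi_apply i)
    have hC : ∀ x : ℕ → ℝ, ∑ i ∈ Finset.Ico (j+1) m, (if i ∈ Finset.Ico (j+1) m then x i else 0) =
        ∑ i ∈ Finset.Ico (j+1) m, x i := fun x =>
        Finset.sum_congr rfl fun i hi => by rw [if_pos hi]
    have hdis : Disjoint (Finset.range (j+1)) (Finset.Ico (j+1) m) := by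
      rw [Finset.disjoint_left]; intro a ha hb; simp at ha hb; omega
    have i1 := indep_sets hm hi _ _ hdis hBm (C := {x | ∑ i ∈ Finset.Ico (j+1) m, x i ≤ -b})
      (measurableSet_le hCm measurable_const) hBS
      (fun x => by simp only [Set.mem_ofPred_eq, hC])
    have i2 := indep_sets hm hi _ _ hdis hBm (C := {x | b ≤ ∑ i ∈ Finset.Ico (j+1) m, x i})
      (measurableSet_le measurable_const hCm) hBS
      (fun x => by simp only [Set.mem_ofPred_eq, hC])
    have hl : μ.real {ω | R j ω ≤ -b} = μ.real {ω | b ≤ R j ω} := by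
      have hlaw := gauss_sum_law hm hi hg (Finset.Ico (j+1) m)
      have a1 : μ {ω | R j ω ≤ -b} = (μ.map (R j)) (Set.Iic (-b)) := by
        rw [Measure.map_apply (hRm j) measurableSet_Iic]; rfl
      have a2 : μ {ω | b ≤ R j ω} = (μ.map (R j)) (Set.Ici b) := by
        rw [Measure.map_apply (hRm j) measurableSet_Ici]; rfl
      rw [measureReal_def, measureReal_def, a1, a2]
      simp only [hR]
      rw [hlaw]
      have := gaussianReal_map_neg (μ := 0) (v := ((Finset.Ico (j+1) m).card : NNReal))
      rw [neg_zero] at this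
      conv_lhs => rw [← this]
      rw [Measure.map_apply measurable_neg measurableSet_Iic]
      congr 2
      ext x; simp
    calc μ.real (Gj j ∩ {ω | R j ω ≤ -b}) = μ.real (Gj j) * μ.real {ω | R j ω ≤ -b} := i1
      _ = μ.real (Gj j) * μ.real {ω | b ≤ R j ω} := by rw [hl]
      _ = _ := i2.symm
  set F : Set Ω := {ω | ∀ i < m, ξ i ω ≤ b} with hF
  -- decomposition
  have hTm : ∀ j, MeasurableSet (Tj j) := by
    intro j
    exact (measurableSet_lt measurable_const (hSm _)).inter (meas_forall_le _ hSm j L)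
  have hTdisj : ∀ i j, i ≠ j → Disjoint (Tj i) (Tj j) := by
    intro i j hij
    rw [Set.disjoint_left]
    rintro ω ⟨h1, h2⟩ ⟨h3, h4⟩
    rcases lt_or_gt_of_ne hij with h | h
    · exact absurd (h4 (i+1) (by omega)) (not_le.mpr h1)
    · exact absurd (h2 (j+1) (by omega)) (not_le.mpr h3)
  have hfirst : ∀ ω, L < S m ω → ∃ j < m, ω ∈ Tj j := by
    intro ω hω
    have hex : ∃ k, L < S k ω := ⟨m, hω⟩
    classical
    have h1 := Nat.find_spec hex
    have h2 := Nat.find_min' hex hω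
    have h3 : Nat.find hex ≠ 0 := by
      intro h0
      rw [h0] at h1
      simp [hS] at h1
      linarith
    refine ⟨Nat.find hex - 1, by omega, ?_, ?_⟩
    · rwa [Nat.sub_add_cancel (by omega)]
    · intro k hk
      have := Nat.find_min hex (m := k) (by omega)
      exact not_lt.mp this
  have hstep1 : μ.real ({ω | L + 2 * b ≤ S m ω} ∩ F) ≤
      ∑ j ∈ Finset.range m, μ.real (Gj j ∩ {ω | b ≤ R j ω}) := by
    refine le_trans (measureReal_mono ?_ (measure_ne_top _ _)) (measureReal_biUnion_finset_le (Finset.range m) _)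
    rintro ω ⟨h1, h2⟩
    simp only [Set.mem_ofPred_eq] at h1
    obtain ⟨j, hj, h3, h4⟩ := hfirst ω (by linarith)
    simp only [Set.mem_iUnion]
    refine ⟨j, Finset.mem_range.mpr hj, ⟨h3, h4, h2 j hj⟩, ?_⟩
    simp only [Set.mem_ofPred_eq]
    have h5 := hRS j hj ω
    have h6 : S (j+1) ω = S j ω + ξ j ω := by simp only [hS]; rw [Finset.sum_range_succ]
    have h7 := h4 j le_rfl
    have h8 := h2 j hj
    linarith
  have hstep2 : ∑ j ∈ Finset.range m, μ.real (Gj j ∩ {ω | R j ω ≤ -b}) ≤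
      μ.real (⋃ j ∈ Finset.range m, (Tj j ∩ {ω | S m ω ≤ L})) := by
    rw [measureReal_biUnion_finset]
    · apply Finset.sum_le_sum
      intro j hj
      refine measureReal_mono ?_ (measure_ne_top _ _)
      rintro ω ⟨⟨h1, h2, h3⟩, h4⟩
      refine ⟨⟨h1, h2⟩, ?_⟩
      simp only [Set.mem_ofPred_eq] at h4 ⊢
      have h5 := hRS j (Finset.mem_range.mp hj) ω
      have h6 : S (j+1) ω = S j ω + ξ j ω := by simp only [hS]; rw [Finset.sum_range_succ]
      have h7 := h2 j le_rfl
      linarith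
    · intro i _ j _ hij
      exact (hTdisj i j hij).mono Set.inter_subset_left Set.inter_subset_left
    · intro j _
      exact (hTm j).inter (measurableSet_le (hSm m) measurable_const)
  set A : Set Ω := {ω | ∀ k ≤ m, S k ω ≤ L} with hA
  set U : Set Ω := ⋃ j ∈ Finset.range m, (Tj j ∩ {ω | S m ω ≤ L}) with hU
  have hUm : MeasurableSet U := Finset.measurableSet_biUnion _ fun j _ =>
    (hTm j).inter (measurableSet_le (hSm m) measurable_const)
  have hAU : Disjoint A U := by
    rw [Set.disjoint_left]
    intro ω h1 h2
    simp only [hU, Set.mem_iUnion] at h2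
    obtain ⟨j, hj, ⟨h3, _⟩, _⟩ := h2
    exact absurd (h1 (j+1) (by have := Finset.mem_range.mp hj; omega)) (not_le.mpr h3)
  set V : Set Ω := {ω | L < S m ω} with hV
  have hVm : MeasurableSet V := measurableSet_lt measurable_const (hSm m)
  have hAUV : Disjoint (A ∪ U) V := by
    rw [Set.disjoint_left]
    rintro ω (h1 | h1) h2
    · exact absurd (h1 m le_rfl) (not_le.mpr h2)
    · simp only [hU, Set.mem_iUnion] at h1
      obtain ⟨j, hj, _, h3⟩ := h1
      exact absurd (show S m ω ≤ L from h3) (not_le.mpr h2)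
  have htot : μ.real A + μ.real U + μ.real V ≤ 1 := by
    rw [← measureReal_union hAU hUm (measure_ne_top _ _) (measure_ne_top _ _), ← measureReal_union hAUV hVm (measure_ne_top _ _) (measure_ne_top _ _)]
    exact measureReal_le_one
  have hFc : μ.real Fᶜ ≤ m * Real.exp (- b ^ 2 / 2) := by
    have : Fᶜ ⊆ ⋃ i ∈ Finset.range m, {ω | b ≤ ξ i ω} := by
      intro ω hω
      simp only [hF, Set.mem_compl_iff, Set.mem_ofPred_eq, not_forall] at hω
      obtain ⟨i, h1, h2⟩ := hω
      simp only [Set.mem_iUnion]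
      exact ⟨i, Finset.mem_range.mpr h1, (not_le.mp h2).le⟩
    refine (measureReal_mono this (measure_ne_top _ _)).trans ((measureReal_biUnion_finset_le _ _).trans ?_)
    refine (Finset.sum_le_sum fun i _ => gauss_tail (hg i) b hb.le).trans ?_
    simp
  -- law of S m
  have hlaw : μ.map (S m) = gaussianReal 0 (m : NNReal) := by
    have := gauss_sum_law hm hi hg (Finset.range m)
    rwa [Finset.card_range] at this
  have hVsymm : μ.real V = μ.real {ω | S m ω < -L} := by
    have a1 : μ {ω | S m ω < -L} = (μ.map (S m)) (Set.Iio (-L)) := by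
      rw [Measure.map_apply (hSm m) measurableSet_Iio]; rfl
    have a2 : μ V = (μ.map (S m)) (Set.Ioi L) := by
      rw [Measure.map_apply (hSm m) measurableSet_Ioi]; rfl
    rw [measureReal_def, measureReal_def, a1, a2, hlaw]
    have := gaussianReal_map_neg (μ := 0) (v := (m : NNReal))
    rw [neg_zero] at this
    conv_rhs => rw [← this]
    rw [Measure.map_apply measurable_neg measurableSet_Iio]
    congr 2
    ext x; simp
  have hIntg : μ.real {ω | -L ≤ S m ω ∧ S m ω ≤ L + 2 * b} ≤ (2 * L + 2 * b) / Real.sqrt m := by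
    have a1 : μ {ω | -L ≤ S m ω ∧ S m ω ≤ L + 2 * b} =
        (μ.map (S m)) (Set.Icc (-L) (-L + (2 * L + 2 * b))) := by
      rw [Measure.map_apply (hSm m) measurableSet_Icc]
      congr 1
      ext ω
      simp only [Set.mem_ofPred_eq, Set.mem_preimage, Set.mem_Icc]
      ring_nf
    rw [measureReal_def, a1, hlaw]
    have := gauss_interval (m : NNReal) (by positivity) (-L) (2 * L + 2 * b) (by linarith)
    simpa [measureReal_def] using this
  have hcov : 1 ≤ μ.real {ω | S m ω < -L} + μ.real {ω | -L ≤ S m ω ∧ S m ω ≤ L + 2 * b} +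
      (μ.real ({ω | L + 2 * b ≤ S m ω} ∩ F) + μ.real Fᶜ) := by
    have h1 : (Set.univ : Set Ω) ⊆ ({ω | S m ω < -L} ∪ {ω | -L ≤ S m ω ∧ S m ω ≤ L + 2 * b}) ∪
      (({ω | L + 2 * b ≤ S m ω} ∩ F) ∪ Fᶜ) := by
      intro ω _
      by_cases h2 : ω ∈ F
      · by_cases h3 : S m ω < -L
        · exact Or.inl (Or.inl h3)
        · by_cases h4 : S m ω ≤ L + 2 * b
          · exact Or.inl (Or.inr ⟨not_lt.mp h3, h4⟩)
          · exact Or.inr (Or.inl ⟨(not_le.mp h4).le, h2⟩)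
      · exact Or.inr (Or.inr h2)
    have h2 := measureReal_mono (μ := μ) h1
    rw [probReal_univ] at h2
    refine h2.trans ((measureReal_union_le _ _).trans (add_le_add (measureReal_union_le _ _)
      (measureReal_union_le _ _)))
  have hsum := Finset.sum_congr rfl (fun j hj => hsymm j (Finset.mem_range.mp hj))
  linarith




lemma window_bound {Ω E : Type*} [MeasurableSpace Ω] [MeasurableSpace E] {μ : Measure Ω}
    [IsProbabilityMeasure μ] {Y : Ω → E} {M : Ω → ℝ} (hY : Measurable Y) (hM : Measurable M)
    (h : IndepFun Y M μ) {g : E → ℝ} (hg : Measurable g) {B : Set E} (hB : MeasurableSet B)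
    (c l : ℝ) (K : ENNReal) (hK : ∀ c, (μ.map M) (Set.Icc c (c + l)) ≤ K) :
    μ {ω | Y ω ∈ B ∧ c ≤ g (Y ω) + M ω ∧ g (Y ω) + M ω ≤ c + l} ≤ μ {ω | Y ω ∈ B} * K := by
  have hp := (indepFun_iff_map_prod_eq_prod_map_map hY.aemeasurable hM.aemeasurable).mp h
  have : IsProbabilityMeasure (μ.map M) := Measure.isProbabilityMeasure_map hM.aemeasurable
  have : IsProbabilityMeasure (μ.map Y) := Measure.isProbabilityMeasure_map hY.aemeasurable
  set D : Set (E × ℝ) := {p | p.1 ∈ B ∧ c ≤ g p.1 + p.2 ∧ g p.1 + p.2 ≤ c + l} with hD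
  have hgm : Measurable (fun p : E × ℝ => g p.1 + p.2) := by fun_prop
  have hDm : MeasurableSet D :=
    (measurable_fst hB).inter ((measurableSet_le measurable_const hgm).inter
      (measurableSet_le hgm measurable_const))
  have e1 : μ {ω | Y ω ∈ B ∧ c ≤ g (Y ω) + M ω ∧ g (Y ω) + M ω ≤ c + l} =
      (μ.map (fun ω => (Y ω, M ω))) D := by
    rw [Measure.map_apply (hY.prodMk hM) hDm]; rfl
  rw [e1, hp, Measure.prod_apply hDm]
  have e2 : μ {ω | Y ω ∈ B} = (μ.map Y) B := by
    rw [Measure.map_apply hY hB]; rfl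
  rw [e2]
  calc ∫⁻ y, (μ.map M) (Prod.mk y ⁻¹' D) ∂(μ.map Y) ≤ ∫⁻ y, B.indicator (fun _ => K) y ∂(μ.map Y) := by
        apply lintegral_mono
        intro y
        by_cases hy : y ∈ B
        · simp only [Set.indicator_of_mem hy]
          refine le_trans (measure_mono ?_) (hK (c - g y))
          rintro z ⟨_, h2, h3⟩
          simp only at h2 h3
          constructor <;> linarith
        · simp only [Set.indicator_of_notMem hy]
          have : Prod.mk y ⁻¹' D = ∅ := by
            ext z
            simp only [Set.mem_preimage, Set.mem_empty_iff_false, iff_false]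
            rintro ⟨h1, _⟩
            exact hy h1
          rw [this]; simp
    _ = _ := by rw [lintegral_indicator hB]; simp [mul_comm]

lemma one_sided' {Ω : Type*} [MeasurableSpace Ω] {μ : Measure Ω} [IsProbabilityMeasure μ]
    {ξ : ℕ → Ω → ℝ} (hm : ∀ i, Measurable (ξ i)) (hi : iIndepFun ξ μ)
    (hg : ∀ i, μ.map (ξ i) = gaussianReal 0 1) (m : ℕ) (hm0 : 1 ≤ m) (L : ℝ)
    (hL : 3 + Real.log m ≤ L) :
    μ.real {ω | ∀ k ≤ m, ∑ i ∈ Finset.range k, ξ i ω ≤ L} ≤ 5 * L / Real.sqrt m := by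
  have hm1 : (1:ℝ) ≤ m := by exact_mod_cast hm0
  have hlog : 0 ≤ Real.log m := Real.log_nonneg hm1
  have h := one_sided hm hi hg m hm0 L L (by linarith) (by linarith)
  refine h.trans ?_
  have hsq : 1 ≤ Real.sqrt m := Real.one_le_sqrt.mpr hm1
  have h1 : (m:ℝ) * Real.exp (-L ^ 2 / 2) ≤ 1 / Real.sqrt m := by
    have h2 : Real.exp (-L ^ 2 / 2) ≤ Real.exp (- (2 * Real.log m)) := by
      apply Real.exp_le_exp.mpr
      nlinarith
    have h3 : Real.exp (- (2 * Real.log m)) = 1 / (m:ℝ) ^ 2 := by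
      rw [Real.exp_neg, mul_comm, Real.exp_mul, Real.exp_log (by linarith)]
      simp
    rw [h3] at h2
    calc (m:ℝ) * Real.exp (-L ^ 2 / 2) ≤ m * (1 / (m:ℝ)^2) := by gcongr
      _ = 1 / m := by field_simp
      _ ≤ 1 / Real.sqrt m := by
        apply one_div_le_one_div_of_le (by linarith)
        rw [Real.sqrt_le_left (by linarith)]
        nlinarith
  calc _ ≤ (2 * L + 2 * L) / Real.sqrt m + 1 / Real.sqrt m := by gcongr
    _ = (4 * L + 1) / Real.sqrt m := by ring
    _ ≤ _ := by gcongr; linarith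

lemma ballot {Ω : Type*} [MeasurableSpace Ω] {μ : Measure Ω} [IsProbabilityMeasure μ]
    {ξ : ℕ → Ω → ℝ} (hm : ∀ i, Measurable (ξ i)) (hi : iIndepFun ξ μ)
    (hg : ∀ i, μ.map (ξ i) = gaussianReal 0 1) (n : ℕ) (hn : 3 ≤ n) (L : ℝ)
    (hL : 3 + Real.log n ≤ L) :
    μ.real {ω | (∀ k ≤ n, ∑ i ∈ Finset.range k, ξ i ω ≤ L) ∧ -L ≤ ∑ i ∈ Finset.range n, ξ i ω}
      ≤ 1500 * L ^ 3 / Real.sqrt n ^ 3 := by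
  obtain ⟨m, hmdef⟩ : ∃ m, m = n / 3 := ⟨_, rfl⟩
  have hm1 : 1 ≤ m := by omega
  have h3m : 3 * m ≤ n := by omega
  have hn6 : n ≤ 5 * m := by omega
  have hnm : (m:ℝ) ≤ n := by exact_mod_cast (by omega : m ≤ n)
  have hm1' : (1:ℝ) ≤ m := by exact_mod_cast hm1
  have hlogm : Real.log m ≤ Real.log n := Real.log_le_log (by linarith) hnm
  have hlogm0 : 0 ≤ Real.log m := Real.log_nonneg hm1'
  have hL0 : 3 ≤ L := by linarith
  -- reversed sequence
  set σ : ℕ → ℕ := fun i => if i < n then n - 1 - i else i with hσ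
  have hσi : Function.Injective σ := by
    intro a b hab
    simp only [hσ] at hab
    split_ifs at hab <;> omega
  have hηm : ∀ i, Measurable (fun ω => - ξ (σ i) ω) := fun i => (hm _).neg
  have hηi : iIndepFun (fun i ω => - ξ (σ i) ω) μ :=
    (hi.precomp hσi).comp (fun _ x => -x) (fun _ => measurable_neg)
  have hηg : ∀ i, μ.map (fun ω => - ξ (σ i) ω) = gaussianReal 0 1 := by
    intro i
    have := gaussianReal_map_neg (μ := 0) (v := 1)
    rw [← hg (σ i), Measure.map_map measurable_neg (hm _), neg_zero] at this
    exact this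
  have b1 := one_sided' hm hi hg m hm1 L (by linarith)
  have b2 := one_sided' hηm hηi hηg m hm1 (2 * L) (by linarith)
  -- sets
  have hs1 : ∀ k, Measurable (fun x : ℕ → ℝ => ∑ i ∈ Finset.range k, x i) := fun k =>
        Finset.measurable_sum _ (fun i _ => measurable_pi_apply i)
  have hs2 : ∀ k, Measurable (fun x : ℕ → ℝ => ∑ i ∈ Finset.range k, - x (σ i)) := fun k =>
        Finset.measurable_sum _ (fun i _ => (measurable_pi_apply _).neg)
  set B1 : Set (ℕ → ℝ) := {x | ∀ k ≤ m, ∑ i ∈ Finset.range k, x i ≤ L} with hB1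
  set B2 : Set (ℕ → ℝ) := {x | ∀ k ≤ m, ∑ i ∈ Finset.range k, - x (σ i) ≤ 2 * L} with hB2
  have hB1m : MeasurableSet B1 := meas_forall_le _ hs1 m L
  have hB2m : MeasurableSet B2 := meas_forall_le _ hs2 m (2 * L)
  have loc1 : ∀ T : Finset ℕ, Finset.range m ⊆ T →
      ∀ x : ℕ → ℝ, (fun i => if i ∈ T then x i else 0) ∈ B1 ↔ x ∈ B1 := by
    intro T hT x
    simp only [hB1, Set.mem_ofPred_eq]
    refine forall₂_congr fun k hk => ?_
    rw [Finset.sum_congr rfl]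
    intro i hi
    rw [if_pos]
    apply hT
    simp at hi ⊢; omega
  have loc2 : ∀ T : Finset ℕ, Finset.Ico (n - m) n ⊆ T →
      ∀ x : ℕ → ℝ, (fun i => if i ∈ T then x i else 0) ∈ B2 ↔ x ∈ B2 := by
    intro T hT x
    simp only [hB2, Set.mem_ofPred_eq]
    refine forall₂_congr fun k hk => ?_
    rw [Finset.sum_congr rfl]
    intro i hi
    rw [if_pos]
    apply hT
    simp at hi
    simp only [hσ, if_pos (by omega : i < n)]
    simp; omega
  have hind := indep_sets hm hi (Finset.range m) (Finset.Ico (n - m) n)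
    (by rw [Finset.disjoint_left]; intro a h1 h2; simp at h1 h2; omega) hB1m hB2m
    (loc1 _ subset_rfl) (loc2 _ subset_rfl)
  set T : Finset ℕ := Finset.range m ∪ Finset.Ico (n - m) n with hT
  set I : Finset ℕ := Finset.Ico m (n - m) with hI
  have hTI : Disjoint T I := by
    rw [Finset.disjoint_left]; intro a h1 h2; simp [hT, hI] at h1 h2; omega
  have hYM := indep_trunc hm hi T I hTI
  have hsI : Measurable (fun x : ℕ → ℝ => ∑ i ∈ I, x i) :=
        Finset.measurable_sum _ (fun i _ => measurable_pi_apply i)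
  have hsn : Measurable (fun x : ℕ → ℝ => ∑ i ∈ T, x i) :=
        Finset.measurable_sum _ (fun i _ => measurable_pi_apply i)
  have hYM2 := hYM.comp measurable_id hsI
  have eM : ((fun x : ℕ → ℝ => ∑ i ∈ I, x i) ∘ fun ω (i : ℕ) => if i ∈ I then ξ i ω else 0) =
      fun ω => ∑ i ∈ I, ξ i ω := by
    funext ω
    simp only [Function.comp]
    exact Finset.sum_congr rfl fun i hi => if_pos hi
  rw [eM, Function.id_comp] at hYM2
  have hYmeas : Measurable (fun ω (i : ℕ) => if i ∈ T then ξ i ω else 0) := by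
    rw [measurable_pi_iff]; intro i
    by_cases h : i ∈ T
    · simp only [h, if_true]; exact hm i
    · simp only [h, if_false]; exact measurable_const
  have hlaw := gauss_sum_law hm hi hg I
  have hcard : I.card = n - m - m := by simp [hI]
  have hcardm : m ≤ I.card := by omega
  have hw := window_bound (B := B1 ∩ B2) hYmeas (Finset.measurable_sum _ (fun i _ => hm i)) hYM2 hsn
    (hB1m.inter hB2m) (-L) (2 * L) (ENNReal.ofReal (2 * L / Real.sqrt m)) (by
      intro c
      rw [hlaw, ← ENNReal.ofReal_toReal (measure_ne_top _ (Set.Icc c (c + 2 * L)))]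
      apply ENNReal.ofReal_le_ofReal
      refine (gauss_interval (I.card : NNReal) (by
        have : I.card ≠ 0 := by omega
        exact_mod_cast this) c (2 * L) (by linarith)).trans ?_
      have : Real.sqrt m ≤ Real.sqrt (I.card) := Real.sqrt_le_sqrt (by exact_mod_cast hcardm)
      have h0 : 0 < Real.sqrt m := Real.sqrt_pos.mpr (by linarith)
      simp only [NNReal.coe_natCast]
      gcongr)
  have hsub : {ω | (∀ k ≤ n, ∑ i ∈ Finset.range k, ξ i ω ≤ L) ∧ -L ≤ ∑ i ∈ Finset.range n, ξ i ω}
      ⊆ {ω | (fun (i : ℕ) => if i ∈ T then ξ i ω else 0) ∈ B1 ∩ B2 ∧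
        -L ≤ ∑ i ∈ T, (if i ∈ T then ξ i ω else 0) + ∑ i ∈ I, ξ i ω ∧
        ∑ i ∈ T, (if i ∈ T then ξ i ω else 0) + ∑ i ∈ I, ξ i ω ≤ -L + 2 * L} := by
    rintro ω ⟨h1, h2⟩
    have e : ∑ i ∈ T, (if i ∈ T then ξ i ω else 0) + ∑ i ∈ I, ξ i ω =
        ∑ i ∈ Finset.range n, ξ i ω := by
      rw [Finset.sum_congr rfl (fun i hi => if_pos hi), ← Finset.sum_union hTI]
      apply Finset.sum_congr _ (fun _ _ => rfl)
      ext a; simp [hT, hI]; omega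
    refine ⟨⟨(loc1 T Finset.subset_union_left _).mpr ?_,
      (loc2 T Finset.subset_union_right _).mpr ?_⟩, ?_, ?_⟩
    · intro k hk
      exact h1 k (by omega)
    · intro k hk
      have key : ∀ k ≤ n, ∑ i ∈ Finset.range (n - k), ξ i ω =
          ∑ i ∈ Finset.range n, ξ i ω + ∑ i ∈ Finset.range k, - ξ (σ i) ω := by
        intro k
        induction k with
        | zero => simp
        | succ k ih =>
          intro hk
          have := ih (by omega)
          rw [Finset.sum_range_succ, ← add_assoc, ← this]
          have e2 : n - k = n - (k+1) + 1 := by omega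
          rw [e2, Finset.sum_range_succ]
          simp only [hσ, if_pos (by omega : k < n)]
          rw [show n - 1 - k = n - (k+1) by omega]
          ring
      have := key k (by omega)
      have h3 := h1 (n - k) (by omega)
      show ∑ i ∈ Finset.range k, - ξ (σ i) ω ≤ 2 * L
      linarith
    · rw [e]; exact h2
    · rw [e]; have := h1 n le_rfl; linarith
  have eB : {ω | (fun (i : ℕ) => if i ∈ T then ξ i ω else 0) ∈ B1 ∩ B2} =
      {ω | (fun i => ξ i ω) ∈ B1 ∧ (fun i => ξ i ω) ∈ B2} := by
    ext ω
    exact and_congr (loc1 T Finset.subset_union_left _) (loc2 T Finset.subset_union_right _)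
  rw [eB] at hw
  have hfin := (measure_mono hsub).trans hw
  have hfin2 := ENNReal.toReal_mono (ENNReal.mul_ne_top (measure_ne_top _ _) ENNReal.ofReal_ne_top)
    hfin
  have hsm : 0 < Real.sqrt m := Real.sqrt_pos.mpr (by linarith)
  rw [ENNReal.toReal_mul, ENNReal.toReal_ofReal (by positivity)] at hfin2
  have hind' : (μ {ω | (fun i => ξ i ω) ∈ B1 ∧ (fun i => ξ i ω) ∈ B2}).toReal ≤
      (5 * L / Real.sqrt m) * (5 * (2 * L) / Real.sqrt m) := by
    rw [← measureReal_def, hind]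
    exact mul_le_mul b1 b2 measureReal_nonneg (by positivity)
  have hsn' : Real.sqrt n ≤ Real.sqrt 5 * Real.sqrt m := by
    rw [← Real.sqrt_mul (by norm_num)]
    apply Real.sqrt_le_sqrt
    exact_mod_cast hn6
  have hsnpos : 0 < Real.sqrt n := Real.sqrt_pos.mpr (by linarith)
  have h5 : Real.sqrt 5 ≤ 2.4 := by
    rw [Real.sqrt_le_left (by norm_num)]; norm_num
  have hinv : 1 / Real.sqrt m ≤ 2.4 / Real.sqrt n := by
    rw [div_le_div_iff₀ hsm hsnpos]
    nlinarith
  calc _ ≤ (μ {ω | (fun i => ξ i ω) ∈ B1 ∧ (fun i => ξ i ω) ∈ B2}).toReal *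
        (2 * L / Real.sqrt m) := hfin2
    _ ≤ (5 * L / Real.sqrt m) * (5 * (2 * L) / Real.sqrt m) * (2 * L / Real.sqrt m) := by gcongr
    _ = 100 * L ^ 3 * (1 / Real.sqrt m) ^ 3 := by ring
    _ ≤ 100 * L ^ 3 * (2.4 / Real.sqrt n) ^ 3 := by gcongr
    _ = (100 * 2.4 ^ 3) * L ^ 3 / Real.sqrt n ^ 3 := by ring
    _ ≤ _ := by gcongr; norm_num




lemma gauss_shift (l : ℝ) (s : Set ℝ) (hs : MeasurableSet s) :
    ∫⁻ x, s.indicator (fun x => ENNReal.ofReal (Real.exp (l * x - l ^ 2 / 2))) x ∂(gaussianReal 0 1)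
      = gaussianReal l 1 s := by
  rw [lintegral_indicator hs, gaussianReal_of_var_ne_zero _ one_ne_zero,
    gaussianReal_of_var_ne_zero _ one_ne_zero, withDensity_apply _ hs,
    restrict_withDensity hs, lintegral_withDensity_eq_lintegral_mul _ (measurable_gaussianPDF 0 1)
      (by fun_prop)]
  congr 1
  ext x
  simp only [Pi.mul_apply, gaussianPDF, gaussianPDFReal]
  rw [← ENNReal.ofReal_mul (by positivity), mul_assoc, ← Real.exp_add]
  congr 3
  simp
  ring

lemma tilt {Ω : Type*} [MeasurableSpace Ω] {μ : Measure Ω} [IsProbabilityMeasure μ]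
    {ξ : ℕ → Ω → ℝ} (hm : ∀ i, Measurable (ξ i)) (hi : iIndepFun ξ μ)
    (hg : ∀ i, μ.map (ξ i) = gaussianReal 0 1) (n : ℕ) (l : ℝ) :
    (μ.withDensity (fun ω => ∏ i : Fin n, ENNReal.ofReal (Real.exp (l * ξ i ω - l ^ 2 / 2)))).map
      (fun ω (i : Fin n) => ξ i ω) = μ.map (fun ω (i : Fin n) => ξ i ω + l) := by
  have hFin : iIndepFun (fun (i : Fin n) => ξ i) μ := hi.precomp Fin.val_injective
  have h2 : iIndepFun (fun (i : Fin n) ω => ξ i ω + l) μ :=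
    hFin.comp (fun _ x => x + l) (fun _ => by fun_prop)
  have hmap : ∀ i : Fin n, μ.map (fun ω => ξ i ω + l) = gaussianReal l 1 := by
    intro i
    have := gaussianReal_map_add_const (μ := 0) (v := 1) l
    rw [← hg i, Measure.map_map (by fun_prop) (hm _), zero_add] at this
    exact this
  rw [h2.map_fun_eq_pi_map (fun i => by have := hm i; fun_prop)]
  simp_rw [hmap]
  symm
  apply Measure.pi_eq
  intro s hs
  have hmm : Measurable (fun ω (i : Fin n) => ξ i ω) := measurable_pi_lambda _ (fun i => hm i)
  have hpre : MeasurableSet ((fun ω (i : Fin n) => ξ i ω) ⁻¹' (Set.univ.pi s)) :=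
    hmm (MeasurableSet.univ_pi hs)
  rw [Measure.map_apply hmm (MeasurableSet.univ_pi hs), withDensity_apply _ hpre,
    ← lintegral_indicator hpre]
  have e1 : ∀ ω, ((fun ω (i : Fin n) => ξ i ω) ⁻¹' (Set.univ.pi s)).indicator
      (fun ω => ∏ i : Fin n, ENNReal.ofReal (Real.exp (l * ξ i ω - l ^ 2 / 2))) ω
      = ∏ i : Fin n, (s i).indicator (fun x => ENNReal.ofReal (Real.exp (l * x - l ^ 2 / 2))) (ξ i ω) := by
    intro ω
    by_cases h : ∀ i : Fin n, ξ i ω ∈ s i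
    · rw [Set.indicator_of_mem (by simpa using h)]
      refine Finset.prod_congr rfl fun i _ => ?_
      rw [Set.indicator_of_mem (h i)]
    · rw [Set.indicator_of_notMem (by simpa using h)]
      push Not at h
      obtain ⟨i, hi⟩ := h
      symm
      exact Finset.prod_eq_zero (Finset.mem_univ i) (Set.indicator_of_notMem hi _)
  simp_rw [e1]
  have hmI : ∀ i : Fin n, Measurable ((s i).indicator (fun x : ℝ => ENNReal.ofReal (Real.exp (l * x - l ^ 2 / 2)))) :=
    fun i => Measurable.indicator (by fun_prop) (hs i)
  rw [lintegral_prod_eq_prod_lintegral_of_indepFun Finset.univ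
    (fun (i : Fin n) ω => (s i).indicator (fun x => ENNReal.ofReal (Real.exp (l * x - l ^ 2 / 2))) (ξ i ω))
    (hFin.comp _ hmI) (fun i => (hmI i).comp (hm i))]
  refine Finset.prod_congr rfl fun i _ => ?_
  rw [← gauss_shift l (s i) (hs i), ← hg i, lintegral_map (hmI i) (hm i)]

lemma tilt_ballot {Ω : Type*} [MeasurableSpace Ω] {μ : Measure Ω} [IsProbabilityMeasure μ]
    {ξ : ℕ → Ω → ℝ} (hm : ∀ i, Measurable (ξ i)) (hi : iIndepFun ξ μ)
    (hg : ∀ i, μ.map (ξ i) = gaussianReal 0 1) (n : ℕ) (hn : 3 ≤ n) (l H L : ℝ) (hl : 0 ≤ l)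
    (hL : 3 + Real.log n ≤ L) (hH : H ≤ L) :
    μ.real {ω | (∀ k ≤ n, ∑ i ∈ Finset.range k, ξ i ω ≤ l * k + L) ∧
        l * n - H ≤ ∑ i ∈ Finset.range n, ξ i ω}
      ≤ Real.exp (l * H - n * l ^ 2 / 2) * (1500 * L ^ 3 / Real.sqrt n ^ 3) := by
  refine le_trans ?_ (mul_le_mul_of_nonneg_left (ballot hm hi hg n hn L hL) (Real.exp_nonneg _))
  set B : Set (Fin n → ℝ) := {x | (∀ k ≤ n, ∑ i : Fin n, (if (i:ℕ) < k then x i else 0) ≤ l * k + L) ∧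
        l * n - H ≤ ∑ i : Fin n, x i} with hB
  have hBm : MeasurableSet B := by
    have h1 := meas_forall_le (α := Fin n → ℝ)
      (fun k x => (∑ i : Fin n, (if (i:ℕ) < k then x i else 0)) - l * k) (fun k => by
        refine Measurable.sub_const (Finset.measurable_sum _ fun i _ => ?_) _
        split_ifs <;> fun_prop) n L
    have h2 : MeasurableSet {x : Fin n → ℝ | l * n - H ≤ ∑ i : Fin n, x i} :=
      measurableSet_le (by fun_prop) (by fun_prop)
    convert h1.inter h2 using 1
    ext x
    simp only [hB, Set.mem_inter_iff, Set.mem_ofPred_eq, sub_le_iff_le_add, add_comm L]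
  have hsum : ∀ (x : ℕ → ℝ) k, k ≤ n → ∑ i : Fin n, (if (i:ℕ) < k then x i else 0)
      = ∑ i ∈ Finset.range k, x i := by
    intro x k hk
    rw [Fin.sum_univ_eq_sum_range (fun i => if i < k then x i else 0) n, ← Finset.sum_filter]
    congr 1
    ext i
    simp
    omega
  have hmm : Measurable (fun ω (i : Fin n) => ξ i ω) := measurable_pi_lambda _ (fun i => hm i)
  have hmm2 : Measurable (fun ω (i : Fin n) => ξ i ω + l) :=
    measurable_pi_lambda _ (fun i => (hm i).add_const l)
  have ht := congrArg (fun ν => ν B) (tilt hm hi hg n l)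
  rw [Measure.map_apply hmm hBm, Measure.map_apply hmm2 hBm, withDensity_apply _ (hmm hBm)] at ht
  have hA : {ω | (∀ k ≤ n, ∑ i ∈ Finset.range k, ξ i ω ≤ l * k + L) ∧
        l * n - H ≤ ∑ i ∈ Finset.range n, ξ i ω} = (fun ω (i : Fin n) => ξ i ω) ⁻¹' B := by
    ext ω
    simp only [hB, Set.mem_preimage, Set.mem_ofPred_eq]
    rw [← Fin.sum_univ_eq_sum_range (fun i => ξ i ω) n]
    refine and_congr_left' ?_
    refine forall₂_congr fun k hk => ?_
    rw [← hsum (fun i => ξ i ω) k hk]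
  have hA2 : (fun ω (i : Fin n) => ξ i ω + l) ⁻¹' B ⊆
      {ω | (∀ k ≤ n, ∑ i ∈ Finset.range k, ξ i ω ≤ L) ∧ -L ≤ ∑ i ∈ Finset.range n, ξ i ω} := by
    intro ω hω
    have hω' : (∀ k ≤ n, ∑ i : Fin n, (if (i:ℕ) < k then ξ i ω + l else 0) ≤ l * k + L) ∧
        l * n - H ≤ ∑ i : Fin n, (ξ i ω + l) := hω
    constructor
    · intro k hk
      have := hω'.1 k hk
      rw [hsum (fun i => ξ i ω + l) k hk, Finset.sum_add_distrib] at this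
      simp at this
      linarith
    · have := hω'.2
      rw [Finset.sum_add_distrib, Fin.sum_univ_eq_sum_range (fun i => ξ i ω) n] at this
      simp at this
      linarith
  rw [hA]
  have key : ENNReal.ofReal (Real.exp (n * l ^ 2 / 2 - l * H)) * μ ((fun ω (i : Fin n) => ξ i ω) ⁻¹' B)
      ≤ μ {ω | (∀ k ≤ n, ∑ i ∈ Finset.range k, ξ i ω ≤ L) ∧ -L ≤ ∑ i ∈ Finset.range n, ξ i ω} := by
    refine le_trans ?_ (ht.le.trans (measure_mono hA2))
    rw [← setLIntegral_const]
    refine setLIntegral_mono' (hmm hBm) fun ω hω => ?_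
    rw [← ENNReal.ofReal_prod_of_nonneg (fun _ _ => Real.exp_nonneg _), ← Real.exp_sum]
    apply ENNReal.ofReal_le_ofReal
    apply Real.exp_le_exp.2
    have : l * n - H ≤ ∑ i : Fin n, ξ i ω := hω.2
    rw [Finset.sum_sub_distrib, ← Finset.mul_sum]
    simp
    nlinarith
  have key2 := ENNReal.toReal_mono (measure_ne_top _ _) key
  rw [ENNReal.toReal_mul, ENNReal.toReal_ofReal (Real.exp_nonneg _)] at key2
  have e : Real.exp (l * H - n * l ^ 2 / 2) * Real.exp (n * l ^ 2 / 2 - l * H) = 1 := by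
    rw [← Real.exp_add]; simp
  calc μ.real ((fun ω (i : Fin n) => ξ i ω) ⁻¹' B)
      = Real.exp (l * H - n * l ^ 2 / 2) * (Real.exp (n * l ^ 2 / 2 - l * H) * μ.real ((fun ω (i : Fin n) => ξ i ω) ⁻¹' B)) := by
        rw [← mul_assoc, e, one_mul]
    _ ≤ _ := mul_le_mul_of_nonneg_left key2 (Real.exp_nonneg _)




/-- upper dyadic point -/
def dyU {ι : Type*} (m : ℕ) (g : ι → Fin (2 ^ (m + 1))) : ι → ℝ := fun i => ((g i : ℕ) : ℝ) / 2 ^ (m + 1)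
/-- lower dyadic point -/
def dyL {ι : Type*} (m : ℕ) (g : ι → Fin (2 ^ (m + 1))) : ι → ℝ := fun i => (((g i : ℕ) / 2 : ℕ) : ℝ) / 2 ^ m

/-- chaining functional -/
def chainG {ι : Type*} [Fintype ι] [DecidableEq ι] (K : ℝ) (w : ℕ → ℝ) (F : (ι → ℝ) → ℝ) : ENNReal :=
  ∑' m : ℕ, ENNReal.ofReal (Real.exp (-(K * m))) *
    ∑ g : ι → Fin (2 ^ (m + 1)), ENNReal.ofReal (Real.exp ((F (dyU m g) - F (dyL m g)) / w m))

lemma chaining {ι : Type*} [Fintype ι] [DecidableEq ι] (K S : ℝ) (hK : 0 ≤ K) (w : ℕ → ℝ) (hw : ∀ m, 0 < w m)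
    (hw1 : ∀ M : ℕ, ∑ m ∈ Finset.range M, w m ≤ 1)
    (hw2 : ∀ M : ℕ, ∑ m ∈ Finset.range M, w m * m ≤ S)
    (F : (ι → ℝ) → ℝ) (hF : Continuous F) (p : ι → ℝ) (hp0 : ∀ i, 0 ≤ p i) (hp1 : ∀ i, p i < 1) :
    ENNReal.ofReal (Real.exp (F p - F 0)) ≤ ENNReal.ofReal (Real.exp (K * S)) * (1 + chainG K w F) := by
  by_cases hG : chainG K w F = ⊤
  · rw [hG]
    simp [ENNReal.mul_top, Real.exp_pos]
  set T : ℝ := (1 + chainG K w F).toReal with hT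
  have hne : 1 + chainG K w F ≠ ⊤ := by simp [hG]
  have hT1 : 1 ≤ T := by
    have := ENNReal.toReal_mono hne (le_self_add (a := (1:ENNReal)) (b := chainG K w F))
    simpa using this
  have hlT : 0 ≤ Real.log T := Real.log_nonneg hT1
  have hterm : ∀ m (g : ι → Fin (2 ^ (m + 1))), F (dyU m g) - F (dyL m g) ≤ w m * (K * m + Real.log T) := by
    intro m g
    have h1 : ENNReal.ofReal (Real.exp (-(K * m))) * ENNReal.ofReal (Real.exp ((F (dyU m g) - F (dyL m g)) / w m))
        ≤ 1 + chainG K w F := by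
      refine le_trans ?_ (le_trans (ENNReal.le_tsum m) (le_add_self : chainG K w F ≤ 1 + chainG K w F))
      gcongr
      exact Finset.single_le_sum (f := fun g => ENNReal.ofReal (Real.exp ((F (dyU m g) - F (dyL m g)) / w m)))
        (fun _ _ => zero_le) (Finset.mem_univ g)
    rw [← ENNReal.ofReal_mul (Real.exp_nonneg _), ← Real.exp_add] at h1
    have h2 := ENNReal.toReal_mono hne h1
    rw [ENNReal.toReal_ofReal (Real.exp_nonneg _), ← hT, ← Real.le_log_iff_exp_le (by linarith)] at h2
    have h3 : (F (dyU m g) - F (dyL m g)) / w m ≤ K * m + Real.log T := by linarith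
    rw [div_le_iff₀ (hw m)] at h3
    linarith
  set q : ℕ → ι → ℝ := fun m i => ((⌊2 ^ m * p i⌋₊ : ℕ) : ℝ) / 2 ^ m with hq
  have hq0 : q 0 = 0 := by
    ext i
    simp [hq, Nat.floor_eq_zero.2 (hp1 i)]
  have hstep : ∀ m, F (q (m + 1)) - F (q m) ≤ w m * (K * m + Real.log T) := by
    intro m
    have hlt : ∀ i, ⌊2 ^ (m + 1) * p i⌋₊ < 2 ^ (m + 1) := by
      intro i
      rw [Nat.floor_lt (mul_nonneg (by positivity) (hp0 i))]
      push_cast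
      have : (0:ℝ) < 2 ^ (m + 1) := by positivity
      nlinarith [hp1 i]
    have := hterm m (fun i => ⟨⌊2 ^ (m + 1) * p i⌋₊, hlt i⟩)
    have e : q m = dyL m (fun i => ⟨⌊2 ^ (m + 1) * p i⌋₊, hlt i⟩) := by
      funext i
      simp only [hq, dyL]
      congr 2
      rw [← Nat.floor_div_ofNat]
      congr 1
      rw [pow_succ]
      ring
    rw [← e] at this
    exact this
  have hsum : ∀ M, F (q M) - F 0 ≤ K * S + Real.log T := by
    intro M
    have h1 : F (q M) - F 0 ≤ ∑ m ∈ Finset.range M, w m * (K * m + Real.log T) := by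
      induction M with
      | zero => simp [hq0]
      | succ M ih =>
        rw [Finset.sum_range_succ]
        linarith [hstep M]
    have h2 : ∑ m ∈ Finset.range M, w m * (K * m + Real.log T)
        = K * ∑ m ∈ Finset.range M, w m * m + (∑ m ∈ Finset.range M, w m) * Real.log T := by
      rw [Finset.mul_sum, Finset.sum_mul, ← Finset.sum_add_distrib]
      refine Finset.sum_congr rfl fun m _ => by ring
    have h3 := mul_le_mul_of_nonneg_left (hw2 M) hK
    have h4 := mul_le_mul_of_nonneg_right (hw1 M) hlT
    linarith
  have hlim : Tendsto q atTop (nhds p) := by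
    rw [tendsto_pi_nhds]
    intro i
    have h2 : Tendsto (fun m : ℕ => (2:ℝ) ^ m) atTop atTop := tendsto_pow_atTop_atTop_of_one_lt (by norm_num)
    have := (tendsto_nat_floor_mul_div_atTop (R := ℝ) (hp0 i)).comp h2
    refine this.congr fun m => ?_
    simp [hq, mul_comm]
  have hfin : F p - F 0 ≤ K * S + Real.log T := by
    have : Tendsto (fun M => F (q M) - F 0) atTop (nhds (F p - F 0)) :=
      ((hF.tendsto p).comp hlim).sub_const _
    exact le_of_tendsto' this hsum
  rw [← ENNReal.ofReal_toReal hne, ← ENNReal.ofReal_mul (Real.exp_nonneg _), ← hT]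
  apply ENNReal.ofReal_le_ofReal
  calc Real.exp (F p - F 0) ≤ Real.exp (K * S + Real.log T) := Real.exp_le_exp.2 hfin
    _ = _ := by rw [Real.exp_add, Real.exp_log (by linarith)]




/-- the hypotheses on the field, bundled -/
structure Fld {d : ℕ} {Ω : Type*} [MeasurableSpace Ω] (P : Measure Ω)
    (k : EuclideanSpace ℝ (Fin d) → ℝ) (X : ℝ → EuclideanSpace ℝ (Fin d) → Ω → ℝ) : Prop where
  hd : 1 ≤ d
  hk1 : ContDiff ℝ 1 k
  hk0 : k 0 = 1
  hksupp : HasCompactSupport k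
  hXmeas : ∀ t x, Measurable (X t x)
  hXgauss : ∀ (n : ℕ) (c : Fin n → ℝ) (t : Fin n → ℝ)
        (x : Fin n → EuclideanSpace ℝ (Fin d)),
      ∃ v : NNReal,
        Measure.map (fun ω => ∑ i, c i * X (t i) (x i) ω) P = gaussianReal 0 v
  hXcent : ∀ t x, ∫ ω, X t x ω ∂P = 0
  hXcov : ∀ t, 0 ≤ t → ∀ x y : EuclideanSpace ℝ (Fin d),
      ∫ ω, X t x ω * X t y ω ∂P = ∫ u in Set.Icc (1:ℝ) (Real.exp t), k (u • (x - y)) / u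
  hXcont : ∀ᵐ ω ∂P, Continuous fun p : ℝ × EuclideanSpace ℝ (Fin d) => X p.1 p.2 ω
  hXindep : ∀ s t : ℝ, 0 ≤ s → s < t →
      Indep (⨆ x : EuclideanSpace ℝ (Fin d),
          MeasurableSpace.comap (fun ω => X t x ω - X s x ω) inferInstance)
        (⨆ u ∈ Set.Icc (0:ℝ) s, ⨆ x : EuclideanSpace ℝ (Fin d),
          MeasurableSpace.comap (X u x) inferInstance) P

/-- the Gaussian space -/
def gsp {d : ℕ} {Ω : Type*} (X : ℝ → EuclideanSpace ℝ (Fin d) → Ω → ℝ) : Submodule ℝ (Ω → ℝ) :=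
  Submodule.span ℝ (Set.range fun p : ℝ × EuclideanSpace ℝ (Fin d) => X p.1 p.2)

lemma gsp_mem {d : ℕ} {Ω : Type*} (X : ℝ → EuclideanSpace ℝ (Fin d) → Ω → ℝ) (t : ℝ)
    (x : EuclideanSpace ℝ (Fin d)) : X t x ∈ gsp X :=
  Submodule.subset_span ⟨(t, x), rfl⟩

/-- covariance function -/
def Kf {d : ℕ} (k : EuclideanSpace ℝ (Fin d) → ℝ) (t : ℝ) (z : EuclideanSpace ℝ (Fin d)) : ℝ :=
  ∫ u in Set.Icc (1:ℝ) (Real.exp t), k (u • z) / u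

section
variable {d : ℕ} {Ω : Type*} [MeasurableSpace Ω] {P : Measure Ω} [IsProbabilityMeasure P]
    {k : EuclideanSpace ℝ (Fin d) → ℝ} {X : ℝ → EuclideanSpace ℝ (Fin d) → Ω → ℝ}

lemma Fld.gauss (h : Fld P k X) {Y : Ω → ℝ} (hY : Y ∈ gsp X) :
    Measurable Y ∧ ∃ v : NNReal, P.map Y = gaussianReal 0 v := by
  obtain ⟨n, c, g, rfl⟩ := Submodule.mem_span_set'.1 hY
  choose p hp using fun i => (g i).2
  have e : (∑ i, c i • (g i : Ω → ℝ)) = fun ω => ∑ i, c i * X (p i).1 (p i).2 ω := by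
    ext ω
    simp only [Finset.sum_apply, Pi.smul_apply, smul_eq_mul]
    refine Finset.sum_congr rfl fun i _ => ?_
    rw [← hp i]
  rw [e]
  refine ⟨Finset.measurable_sum _ fun i _ => (h.hXmeas _ _).const_mul _, h.hXgauss n c _ _⟩

lemma Fld.memLp (h : Fld P k X) {Y : Ω → ℝ} (hY : Y ∈ gsp X) : MemLp Y 2 P := by
  obtain ⟨hm, v, hv⟩ := h.gauss hY
  have := memLp_id_gaussianReal (μ := 0) (v := v) 2
  rw [← hv] at this
  exact (memLp_map_measure_iff (by fun_prop) hm.aemeasurable).1 this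

lemma Fld.int_mul (h : Fld P k X) {Y Z : Ω → ℝ} (hY : Y ∈ gsp X) (hZ : Z ∈ gsp X) :
    Integrable (fun ω => Y ω * Z ω) P := (h.memLp hY).integrable_mul (h.memLp hZ)

lemma Fld.mean (h : Fld P k X) {Y : Ω → ℝ} (hY : Y ∈ gsp X) : ∫ ω, Y ω ∂P = 0 := by
  obtain ⟨hm, v, hv⟩ := h.gauss hY
  have := integral_id_gaussianReal (μ := 0) (v := v)
  rw [← hv, integral_map hm.aemeasurable (by fun_prop)] at this
  exact this

lemma Fld.law (h : Fld P k X) {Y : Ω → ℝ} (hY : Y ∈ gsp X) :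
    P.map Y = gaussianReal 0 (∫ ω, Y ω * Y ω ∂P).toNNReal := by
  obtain ⟨hm, v, hv⟩ := h.gauss hY
  have e : (∫ ω, Y ω * Y ω ∂P) = v := by
    have := variance_id_gaussianReal (μ := 0) (v := v)
    rw [← hv, variance_id_map hm.aemeasurable, variance_of_integral_eq_zero hm.aemeasurable (h.mean hY)] at this
    rw [← this]
    congr 1
    ext ω
    simp [sq]
  rw [e, hv]
  simp

lemma Fld.lexp (h : Fld P k X) {Y : Ω → ℝ} (hY : Y ∈ gsp X) :
    ∫⁻ ω, ENNReal.ofReal (Real.exp (Y ω)) ∂P = ENNReal.ofReal (Real.exp ((∫ ω, Y ω * Y ω ∂P) / 2)) := by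
  have hl := h.law hY
  have hm := (h.gauss hY).1
  have hnn : 0 ≤ ∫ ω, Y ω * Y ω ∂P := integral_nonneg fun ω => mul_self_nonneg _
  have h1 := mgf_gaussianReal hl 1
  rw [mgf] at h1
  simp only [one_mul, zero_mul, zero_add, one_pow, mul_one, Real.coe_toNNReal _ hnn] at h1
  rw [← h1, ofReal_integral_eq_lintegral_ofReal _ (ae_of_all _ fun _ => Real.exp_nonneg _)]
  have := integrable_exp_mul_gaussianReal (μ := 0) (v := (∫ ω, Y ω * Y ω ∂P).toNNReal) 1
  rw [← hl, integrable_map_measure (by fun_prop) hm.aemeasurable] at this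
  simpa [Function.comp_def] using this

lemma Fld.cov (h : Fld P k X) (s t : ℝ) (hs : 0 ≤ s) (hst : s ≤ t) (x y : EuclideanSpace ℝ (Fin d)) :
    ∫ ω, X s x ω * X t y ω ∂P = Kf k s (x - y) := by
  rcases hst.eq_or_lt with rfl | hlt
  · exact h.hXcov s hs x y
  have hD : (fun ω => X t y ω - X s y ω) ∈ gsp X := (gsp X).sub_mem (gsp_mem X t y) (gsp_mem X s y)
  have hind : IndepFun (fun ω => X t y ω - X s y ω) (X s x) P := by
    rw [IndepFun_iff_Indep]
    refine indep_of_indep_of_le_left (indep_of_indep_of_le_right (h.hXindep s t hs hlt) ?_) ?_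
    · exact le_trans (le_iSup (fun x => MeasurableSpace.comap (X s x) inferInstance) x)
        (le_iSup₂_of_le (f := fun u (_ : u ∈ Set.Icc (0:ℝ) s) => ⨆ x : EuclideanSpace ℝ (Fin d),
          MeasurableSpace.comap (X u x) inferInstance) s ⟨hs, le_rfl⟩ le_rfl)
    · exact le_iSup (fun y => MeasurableSpace.comap (fun ω => X t y ω - X s y ω) inferInstance) y
  have h0 := hind.integral_fun_mul_eq_mul_integral (h.gauss hD).1.aestronglyMeasurable
    (h.hXmeas s x).aestronglyMeasurable
  rw [h.hXcent, mul_zero] at h0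
  have e : ∀ ω, X s x ω * X t y ω = X s x ω * X s y ω + (X t y ω - X s y ω) * X s x ω := fun ω => by ring
  simp_rw [e]
  rw [integral_add (h.int_mul (gsp_mem X _ _) (gsp_mem X _ _)) (h.int_mul hD (gsp_mem X _ _)), h0, add_zero]
  exact h.hXcov s hs x y

lemma Fld.K_zero (h : Fld P k X) (t : ℝ) (ht : 0 ≤ t) : Kf k t 0 = t := by
  have : 1 ≤ Real.exp t := Real.one_le_exp ht
  rw [Kf, integral_Icc_eq_integral_Ioc, ← intervalIntegral.integral_of_le this]
  simp only [smul_zero, h.hk0]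
  rw [integral_one_div_of_pos one_pos (Real.exp_pos t)]
  simp

lemma Fld.K_lip (h : Fld P k X) : ∃ Λ : ℝ, 0 ≤ Λ ∧ ∀ t, 0 ≤ t → ∀ z w : EuclideanSpace ℝ (Fin d),
    |Kf k t z - Kf k t w| ≤ Λ * Real.exp t * ‖z - w‖ := by
  obtain ⟨C, hC⟩ := ContDiff.lipschitzWith_of_hasCompactSupport h.hksupp h.hk1 one_ne_zero
  refine ⟨C, C.2, fun t ht z w => ?_⟩
  have hle : 1 ≤ Real.exp t := Real.one_le_exp ht
  have hIntg : ∀ z, IntegrableOn (fun u : ℝ => k (u • z) / u) (Set.Icc 1 (Real.exp t)) := by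
    intro z
    apply ContinuousOn.integrableOn_Icc
    have := h.hk1.continuous
    refine ContinuousOn.div (by fun_prop) (by fun_prop) fun u hu => ?_
    linarith [hu.1]
  rw [Kf, Kf, ← integral_sub (hIntg z) (hIntg w), ← Real.norm_eq_abs]
  have hb : ∀ u ∈ Set.Icc (1:ℝ) (Real.exp t), ‖k (u • z) / u - k (u • w) / u‖ ≤ C * ‖z - w‖ := by
    intro u hu
    have hu0 : 0 < u := by linarith [hu.1]
    have := hC.norm_sub_le (u • z) (u • w)
    rw [← smul_sub, norm_smul, Real.norm_of_nonneg hu0.le] at this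
    rw [← sub_div, norm_div, Real.norm_of_nonneg hu0.le, div_le_iff₀ hu0]
    linarith
  have := norm_setIntegral_le_of_norm_le_const (μ := volume) (by simp) hb
  refine this.trans ?_
  rw [Real.volume_real_Icc_of_le hle]
  have : 0 ≤ (C:ℝ) * ‖z - w‖ := by positivity
  nlinarith

lemma Fld.var_incr (h : Fld P k X) (s t : ℝ) (hs : 0 ≤ s) (hst : s ≤ t) (y z : EuclideanSpace ℝ (Fin d)) :
    ∫ ω, (X t y ω - X s z ω) * (X t y ω - X s z ω) ∂P = (t - s) + 2 * (Kf k s 0 - Kf k s (z - y)) := by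
  have e : ∀ ω, (X t y ω - X s z ω) * (X t y ω - X s z ω)
     = X t y ω * X t y ω - 2 * (X s z ω * X t y ω) + X s z ω * X s z ω := fun ω => by ring
  simp_rw [e]
  have i1 := h.int_mul (gsp_mem X t y) (gsp_mem X t y)
  have i2 := h.int_mul (gsp_mem X s z) (gsp_mem X t y)
  have i3 := h.int_mul (gsp_mem X s z) (gsp_mem X s z)
  have i4 : Integrable (fun ω => X t y ω * X t y ω - 2 * (X s z ω * X t y ω)) P := i1.sub (i2.const_mul 2)
  rw [integral_add i4 i3, integral_sub i1 (i2.const_mul 2), integral_const_mul,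
    h.cov t t (hs.trans hst) le_rfl, h.cov s t hs hst, h.cov s s hs le_rfl, sub_self, sub_self,
    h.K_zero t (hs.trans hst), h.K_zero s hs]
  ring

lemma Fld.cov_incr (h : Fld P k X) (r s t : ℝ) (hr : 0 ≤ r) (hrs : r ≤ s) (hst : s ≤ t)
    (x y z : EuclideanSpace ℝ (Fin d)) :
    ∫ ω, X r x ω * (X t y ω - X s z ω) ∂P = Kf k r (x - y) - Kf k r (x - z) := by
  simp_rw [mul_sub]
  rw [integral_sub (h.int_mul (gsp_mem X _ _) (gsp_mem X _ _)) (h.int_mul (gsp_mem X _ _) (gsp_mem X _ _)),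
    h.cov r t hr (hrs.trans hst), h.cov r s hr hrs]

/-- increments along integer times -/
def xi {d : ℕ} {Ω : Type*} (X : ℝ → EuclideanSpace ℝ (Fin d) → Ω → ℝ) (x : EuclideanSpace ℝ (Fin d))
    (j : ℕ) (ω : Ω) : ℝ := X (j + 1) x ω - X j x ω

lemma xi_mem {d : ℕ} {Ω : Type*} (X : ℝ → EuclideanSpace ℝ (Fin d) → Ω → ℝ) (x) (j : ℕ) : xi X x j ∈ gsp X :=
  (gsp X).sub_mem (gsp_mem X _ x) (gsp_mem X _ x)

lemma Fld.xi_law (h : Fld P k X) (x) (j : ℕ) : P.map (xi X x j) = gaussianReal 0 1 := by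
  rw [h.law (xi_mem X x j)]
  have := h.var_incr j (j + 1) (by positivity) (by linarith) x x
  simp only [xi]
  rw [this]
  simp

lemma Fld.xi_cov (h : Fld P k X) (x) (i j : ℕ) (hij : i < j) :
    ∫ ω, xi X x i ω * xi X x j ω ∂P = 0 := by
  have hij' : (i:ℝ) + 1 ≤ j := by exact_mod_cast hij
  have h1 := h.cov_incr (i + 1) j (j + 1) (by positivity) hij' (by linarith) x x x
  have h2 := h.cov_incr i j (j + 1) (by positivity) (by linarith) (by linarith) x x x
  simp only [xi] 
  have e : ∀ ω, (X (i + 1) x ω - X i x ω) * (X (j + 1) x ω - X j x ω)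
    = X (i + 1) x ω * (X (j + 1) x ω - X j x ω) - X i x ω * (X (j + 1) x ω - X j x ω) := fun ω => by ring
  simp_rw [e]
  have i1 : Integrable (fun ω => X (i + 1) x ω * (X (j + 1) x ω - X j x ω)) P :=
    h.int_mul (gsp_mem X _ _) (xi_mem X x j)
  have i2 : Integrable (fun ω => X i x ω * (X (j + 1) x ω - X j x ω)) P :=
    h.int_mul (gsp_mem X _ _) (xi_mem X x j)
  rw [integral_sub i1 i2, h1, h2]
  simp

lemma Fld.xi_indep (h : Fld P k X) (x) : iIndepFun (xi X x) P := by
  rw [iIndepFun_iff_finset]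
  intro s
  have hg : HasGaussianLaw (fun ω => ((fun i : s => xi X x i) · ω)) P := by
    constructor
    apply isGaussian_of_map_eq_gaussianReal
    intro L
    have hY : (∑ i : s, L (Pi.single i 1) • xi X x i) ∈ gsp X :=
      (gsp X).sum_mem fun i _ => (gsp X).smul_mem _ (xi_mem X x i)
    obtain ⟨_, v, hv⟩ := h.gauss hY
    refine ⟨0, v, ?_⟩
    have hmm : Measurable (fun ω (i : s) => xi X x i ω) :=
      measurable_pi_lambda _ fun i => (h.gauss (xi_mem X x i)).1
    rw [← hv]
    refine (Measure.map_map (L.continuous.measurable) hmm).trans ?_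
    congr 1
    ext ω
    simp only [Function.comp_apply, Finset.sum_apply, Pi.smul_apply, smul_eq_mul]
    conv_lhs => rw [pi_eq_sum_univ' (fun i : s => xi X x i ω)]
    rw [map_sum]
    refine Finset.sum_congr rfl fun i _ => ?_
    rw [map_smul, smul_eq_mul, mul_comm]
  refine hg.iIndepFun_of_covariance_eq_zero fun i j hij => ?_
  have hij' : (i:ℕ) ≠ j := fun e => hij (Subtype.ext e)
  rw [covariance, h.mean (xi_mem X x i), h.mean (xi_mem X x j)]
  simp only [sub_zero]
  rcases lt_or_gt_of_ne hij' with hlt | hlt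
  · exact h.xi_cov x _ _ hlt
  · rw [← h.xi_cov x _ _ hlt]
    congr 1
    ext ω
    ring

lemma Fld.X_zero (h : Fld P k X) (x) : ∀ᵐ ω ∂P, X 0 x ω = 0 := by
  have h1 := h.cov 0 0 le_rfl le_rfl x x
  rw [sub_self, h.K_zero 0 le_rfl] at h1
  rw [integral_eq_zero_iff_of_nonneg (fun ω => mul_self_nonneg _)
    (h.int_mul (gsp_mem X _ _) (gsp_mem X _ _))] at h1
  filter_upwards [h1] with ω hω
  simpa using hω

lemma Fld.xi_sum (h : Fld P k X) (x) : ∀ᵐ ω ∂P, ∀ j : ℕ, ∑ i ∈ Finset.range j, xi X x i ω = X j x ω := by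
  filter_upwards [h.X_zero x] with ω hω j
  have := Finset.sum_range_sub (fun i : ℕ => X (i:ℝ) x ω) j
  simp only [Nat.cast_add, Nat.cast_one, Nat.cast_zero, hω, sub_zero] at this
  exact this

lemma Fld.walk (h : Fld P k X) (x) (n : ℕ) (hn : 3 ≤ n) (l H L : ℝ) (hl : 0 ≤ l)
    (hL : 3 + Real.log n ≤ L) (hH : H ≤ L) :
    P.real {ω | (∀ j : ℕ, j ≤ n → X j x ω ≤ l * j + L) ∧ l * n - H ≤ X n x ω}
      ≤ Real.exp (l * H - n * l ^ 2 / 2) * (1500 * L ^ 3 / Real.sqrt n ^ 3) := by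
  refine le_trans (le_of_eq ?_) (tilt_ballot (fun i => (h.gauss (xi_mem X x i)).1) (h.xi_indep x) (h.xi_law x)
    n hn l H L hl hL hH)
  apply measureReal_congr
  filter_upwards [h.xi_sum x] with ω hω
  apply propext
  show _ ∧ _ ↔ _ ∧ _
  simp_rw [hω]

end




/-- spatial part of cell parametrization -/
def cy {d : ℕ} (n : ℕ) (x : EuclideanSpace ℝ (Fin d)) (p : Option (Fin d) → ℝ) : EuclideanSpace ℝ (Fin d) :=
  x + Real.exp (-(n:ℝ)) • (WithLp.toLp 2 (fun i => p (some i)))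

/-- chaining weights -/
def rr : ℝ := (Real.sqrt 2)⁻¹
/-- chaining weights -/
def ww (m : ℕ) : ℝ := (1 - rr) * rr ^ m

lemma rr_pos : 0 < rr := by unfold rr; positivity
lemma rr_sq : rr ^ 2 = 1 / 2 := by
  unfold rr
  rw [inv_pow, Real.sq_sqrt (by norm_num)]
  norm_num
lemma rr_lt : rr < 1 := by
  nlinarith [rr_sq, rr_pos]
lemma ww_pos (m : ℕ) : 0 < ww m := mul_pos (by linarith [rr_lt]) (pow_pos rr_pos m)

lemma ww_sum1 (M : ℕ) : ∑ m ∈ Finset.range M, ww m ≤ 1 := by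
  have h1 : Summable (fun m : ℕ => rr ^ m) := summable_geometric_of_lt_one rr_pos.le rr_lt
  have := (h1.mul_left (1 - rr)).sum_le_tsum (Finset.range M) (fun i _ => (ww_pos i).le)
  refine this.trans ?_
  show ∑' m : ℕ, (1 - rr) * rr ^ m ≤ 1
  rw [tsum_mul_left, tsum_geometric_of_lt_one rr_pos.le rr_lt, mul_inv_cancel₀]
  linarith [rr_lt]

lemma ww_sum2 : ∃ S : ℝ, ∀ M : ℕ, ∑ m ∈ Finset.range M, ww m * m ≤ S := by
  have h1 : Summable (fun m : ℕ => (m:ℝ) ^ 1 * rr ^ m) :=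
    summable_pow_mul_geometric_of_norm_lt_one 1 (by rw [Real.norm_of_nonneg rr_pos.le]; exact rr_lt)
  have h2 : Summable (fun m : ℕ => ww m * m) := by
    refine (h1.mul_left (1 - rr)).congr fun m => ?_
    unfold ww; ring
  exact ⟨_, fun M => h2.sum_le_tsum _ fun i _ => mul_nonneg (ww_pos i).le (by positivity)⟩

lemma dy_diff {ι : Type*} (m : ℕ) (g : ι → Fin (2 ^ (m + 1))) (i : ι) :
    0 ≤ dyU m g i - dyL m g i ∧ dyU m g i - dyL m g i ≤ (1/2:ℝ) ^ m := by
  have e : dyU m g i - dyL m g i = (((g i : ℕ) : ℝ) - 2 * (((g i : ℕ) / 2 : ℕ) : ℝ)) / 2 ^ (m + 1) := by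
    simp only [dyU, dyL]
    field_simp
    ring
  have h1 : 2 * ((g i : ℕ) / 2) ≤ (g i : ℕ) := by omega
  have h2 : (g i : ℕ) ≤ 2 * ((g i : ℕ) / 2) + 1 := by omega
  have h1' : (2:ℝ) * (((g i : ℕ) / 2 : ℕ) : ℝ) ≤ ((g i : ℕ) : ℝ) := by exact_mod_cast h1
  have h2' : ((g i : ℕ) : ℝ) ≤ (2:ℝ) * (((g i : ℕ) / 2 : ℕ) : ℝ) + 1 := by exact_mod_cast h2
  rw [e]
  constructor
  · apply div_nonneg (by linarith) (by positivity)
  · rw [div_le_iff₀ (by positivity), one_div, inv_pow]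
    have e : ((2:ℝ) ^ m)⁻¹ * 2 ^ (m + 1) = 2 := by
      rw [pow_succ]; field_simp
    rw [e]
    linarith

lemma dyL_nonneg {ι : Type*} (m : ℕ) (g : ι → Fin (2 ^ (m + 1))) (i : ι) : 0 ≤ dyL m g i := by
  simp only [dyL]; positivity

lemma dyL_le {ι : Type*} (m : ℕ) (g : ι → Fin (2 ^ (m + 1))) (i : ι) : dyL m g i ≤ 1 := by
  have h1 : 2 * ((g i : ℕ) / 2) ≤ 2 ^ (m + 1) := le_trans (by omega) (g i).2.le
  have h2 : ((g i : ℕ) / 2) ≤ 2 ^ m := by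
    have e : 2 ^ (m + 1) = 2 * 2 ^ m := by rw [pow_succ]; ring
    omega
  simp only [dyL]
  rw [div_le_one (by positivity)]
  exact_mod_cast h2

lemma cy_diff {d : ℕ} (n : ℕ) (x : EuclideanSpace ℝ (Fin d)) (m : ℕ)
    (g : Option (Fin d) → Fin (2 ^ (m + 1))) :
    ‖cy n x (dyU m g) - cy n x (dyL m g)‖ ≤ Real.exp (-(n:ℝ)) * (d * (1/2:ℝ) ^ m) := by
  have e : cy n x (dyU m g) - cy n x (dyL m g)
     = Real.exp (-(n:ℝ)) • (WithLp.toLp 2 (fun i => dyU m g (some i) - dyL m g (some i)) : EuclideanSpace ℝ (Fin d)) := by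
    simp only [cy]
    ext i
    simp
    ring
  rw [e, norm_smul, Real.norm_of_nonneg (Real.exp_nonneg _)]
  gcongr
  rw [EuclideanSpace.norm_eq]
  apply Real.sqrt_le_iff.2 ⟨by positivity, ?_⟩
  have : ∀ i : Fin d, ‖dyU m g (some i) - dyL m g (some i)‖ ^ 2 ≤ ((1/2:ℝ) ^ m) ^ 2 := by
    intro i
    rw [Real.norm_of_nonneg (dy_diff m g _).1]
    exact pow_le_pow_left₀ (dy_diff m g _).1 (dy_diff m g _).2 2
  refine (Finset.sum_le_sum fun i _ => this i).trans ?_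
  simp only [Finset.sum_const, Finset.card_univ, Fintype.card_fin, nsmul_eq_mul]
  rw [mul_pow]
  gcongr
  have : (d:ℝ) ≤ (d:ℝ) * d := by exact_mod_cast Nat.le_mul_self d
  rw [sq]; exact this

section
variable {d : ℕ} {Ω : Type*} [MeasurableSpace Ω] {P : Measure Ω} [IsProbabilityMeasure P]
    {k : EuclideanSpace ℝ (Fin d) → ℝ} {X : ℝ → EuclideanSpace ℝ (Fin d) → Ω → ℝ}

/-- exponential moment of one edge -/
lemma Fld.edge (h : Fld P k X) (κ : ℝ) (hκ : 0 ≤ κ) : ∃ B : ℝ, ∀ (n : ℕ) (x : EuclideanSpace ℝ (Fin d)) (m : ℕ)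
    (g : Option (Fin d) → Fin (2 ^ (m + 1))),
    ∫⁻ ω, ENNReal.ofReal (Real.exp (Real.sqrt (2 * d) * X n x ω - d * n)) *
      ENNReal.ofReal (Real.exp ((κ * X (n + dyU m g none) (cy n x (dyU m g)) ω
        - κ * X (n + dyL m g none) (cy n x (dyL m g)) ω) / ww m)) ∂P ≤ ENNReal.ofReal (Real.exp B) := by
  obtain ⟨Λ, hΛ0, hΛ⟩ := h.K_lip
  set l := Real.sqrt (2 * d) with hl
  have hl0 : 0 ≤ l := Real.sqrt_nonneg _
  have hl2 : l ^ 2 = 2 * d := Real.sq_sqrt (by positivity)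
  set A : ℝ := 1 + 2 * (Λ * Real.exp 1 * d) with hA
  have hA0 : 0 ≤ A := by positivity
  have hr := rr_lt
  refine ⟨l * (κ / (1 - rr)) * A + (κ / (1 - rr)) ^ 2 * A, fun n x m g => ?_⟩
  set u := X (n + dyU m g none) (cy n x (dyU m g)) with hu
  set v := X (n + dyL m g none) (cy n x (dyL m g)) with hv
  set y := cy n x (dyU m g) with hy
  set z := cy n x (dyL m g) with hz
  set θ : ℝ := κ / ww m with hθ
  have hθ0 : 0 ≤ θ := div_nonneg hκ (ww_pos m).le
  set Y : Ω → ℝ := fun ω => l * X n x ω + θ * (u ω - v ω) with hY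
  have hD : (fun ω => u ω - v ω) ∈ gsp X := (gsp X).sub_mem (gsp_mem X _ _) (gsp_mem X _ _)
  have hYm : Y ∈ gsp X := (gsp X).add_mem ((gsp X).smul_mem l (gsp_mem X n x)) ((gsp X).smul_mem θ hD)
  have e1 : ∀ ω, ENNReal.ofReal (Real.exp (l * X n x ω - d * n)) *
      ENNReal.ofReal (Real.exp ((κ * u ω - κ * v ω) / ww m)) =
      ENNReal.ofReal (Real.exp (-(d * n))) * ENNReal.ofReal (Real.exp (Y ω)) := by
    intro ω
    rw [← ENNReal.ofReal_mul (Real.exp_nonneg _), ← ENNReal.ofReal_mul (Real.exp_nonneg _),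
      ← Real.exp_add, ← Real.exp_add]
    congr 2
    simp only [hY, hθ]
    ring
  simp_rw [e1]
  rw [lintegral_const_mul _ (by have := (h.gauss hYm).1; fun_prop), h.lexp hYm,
    ← ENNReal.ofReal_mul (Real.exp_nonneg _), ← Real.exp_add]
  apply ENNReal.ofReal_le_ofReal
  apply Real.exp_le_exp.2
  -- second moment
  have hs0 : (0:ℝ) ≤ n + dyL m g none := add_nonneg (by positivity) (dyL_nonneg m g none)
  have hst : (n:ℝ) + dyL m g none ≤ n + dyU m g none := by linarith [(dy_diff m g none).1]
  have c1 := h.cov n n (by positivity) le_rfl x x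
  have c2 := h.cov_incr n (n + dyL m g none) (n + dyU m g none) (by positivity)
    (by linarith [dyL_nonneg m g none]) hst x y z
  have c3 := h.var_incr (n + dyL m g none) (n + dyU m g none) hs0 hst y z
  rw [sub_self, h.K_zero n (by positivity)] at c1
  have e2 : ∀ ω, Y ω * Y ω = l ^ 2 * (X n x ω * X n x ω) + 2 * l * θ * (X n x ω * (u ω - v ω))
      + θ ^ 2 * ((u ω - v ω) * (u ω - v ω)) := fun ω => by simp only [hY]; ring
  have i1 := h.int_mul (gsp_mem X n x) (gsp_mem X n x)
  have i2 := h.int_mul (gsp_mem X n x) hD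
  have i3 := h.int_mul hD hD
  have i4 : Integrable (fun ω => l ^ 2 * (X n x ω * X n x ω) + 2 * l * θ * (X n x ω * (u ω - v ω))) P :=
    (i1.const_mul _).add (i2.const_mul _)
  simp_rw [e2]
  rw [integral_add i4 (i3.const_mul _), integral_add (i1.const_mul _) (i2.const_mul _),
    integral_const_mul, integral_const_mul, integral_const_mul, c1, c2, c3, hl2]
  set δ : ℝ := (1/2:ℝ) ^ m with hδ
  have hδr : δ = (rr ^ m) ^ 2 := by rw [← pow_mul, mul_comm, pow_mul, rr_sq]
  have hyz : ‖y - z‖ ≤ Real.exp (-(n:ℝ)) * (d * δ) := cy_diff n x m g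
  have hexp : Real.exp (n:ℝ) * Real.exp (-(n:ℝ)) = 1 := by rw [← Real.exp_add]; simp
  have b2 : Kf k n (x - y) - Kf k n (x - z) ≤ A * δ := by
    have := (abs_le.1 (hΛ n (by positivity) (x - y) (x - z))).2
    have e3 : ‖x - y - (x - z)‖ = ‖y - z‖ := by rw [← norm_neg]; congr 1; abel
    rw [e3] at this
    have h4 : Λ * Real.exp n * ‖y - z‖ ≤ Λ * Real.exp n * (Real.exp (-(n:ℝ)) * (d * δ)) := by gcongr
    have h5 : Λ * Real.exp n * (Real.exp (-(n:ℝ)) * (d * δ)) = Λ * (d * δ) := by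
      linear_combination (Λ * d * δ) * hexp
    have h6 : Λ * (d * δ) ≤ A * δ := by
      have : Λ * d ≤ Λ * Real.exp 1 * d := by
        have : 1 ≤ Real.exp 1 := Real.one_le_exp (by norm_num)
        have : 0 ≤ Λ * d := by positivity
        nlinarith
      have h7 : Λ * d ≤ A := by
        have : 0 ≤ Λ * d := by positivity
        linarith
      have : 0 ≤ δ := by positivity
      nlinarith
    linarith
  have b3 : (n + dyU m g none) - (n + dyL m g none) + 2 * (Kf k (n + dyL m g none) 0 - Kf k (n + dyL m g none) (z - y)) ≤ A * δ := by
    have := (abs_le.1 (hΛ (n + dyL m g none) hs0 0 (z - y))).2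
    have e3 : ‖0 - (z - y)‖ = ‖y - z‖ := by congr 1; abel
    rw [e3] at this
    have h3 : Real.exp (n + dyL m g none) ≤ Real.exp n * Real.exp 1 := by
      rw [← Real.exp_add]; exact Real.exp_le_exp.2 (by linarith [dyL_le m g none])
    have h4 : Λ * Real.exp (n + dyL m g none) * ‖y - z‖ ≤ Λ * (Real.exp n * Real.exp 1) * (Real.exp (-(n:ℝ)) * (d * δ)) := by gcongr
    have h5 : Λ * (Real.exp n * Real.exp 1) * (Real.exp (-(n:ℝ)) * (d * δ)) = Λ * Real.exp 1 * d * δ := by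
      linear_combination (Λ * Real.exp 1 * d * δ) * hexp
    have h6 := (dy_diff m g none).2
    have h7 : A * δ = δ + 2 * (Λ * Real.exp 1 * d * δ) := by simp only [hA]; ring
    linarith
  have hwθ : θ * rr ^ m = κ / (1 - rr) := by
    have := pow_pos rr_pos m
    have h1 : 1 - rr ≠ 0 := by linarith
    simp only [hθ, ww]
    field_simp
  have hrm1 : rr ^ m ≤ 1 := pow_le_one₀ rr_pos.le rr_lt.le
  have hrm0 : 0 ≤ rr ^ m := pow_nonneg rr_pos.le m
  have hq : 0 ≤ κ / (1 - rr) := div_nonneg hκ (by linarith)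
  have f2 : l * θ * (Kf k n (x - y) - Kf k n (x - z)) ≤ l * (κ / (1 - rr)) * A := by
    calc l * θ * (Kf k n (x - y) - Kf k n (x - z)) ≤ l * θ * (A * δ) :=
          mul_le_mul_of_nonneg_left b2 (by positivity)
      _ = (l * (κ / (1 - rr)) * A) * rr ^ m := by rw [hδr, ← hwθ]; ring
      _ ≤ (l * (κ / (1 - rr)) * A) * 1 := by gcongr
      _ = _ := mul_one _
  have f3 : θ ^ 2 * ((n + dyU m g none) - (n + dyL m g none) + 2 * (Kf k (n + dyL m g none) 0 - Kf k (n + dyL m g none) (z - y))) ≤ (κ / (1 - rr)) ^ 2 * A := by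
    calc _ ≤ θ ^ 2 * (A * δ) := mul_le_mul_of_nonneg_left b3 (by positivity)
      _ = _ := by rw [hδr, ← hwθ]; ring
  have f4 : 0 ≤ (κ / (1 - rr)) ^ 2 * A := by positivity
  linarith

lemma Fld.cell (h : Fld P k X) (κ : ℝ) (hκ : 0 ≤ κ) : ∃ C : ℝ, 0 ≤ C ∧ ∀ (n : ℕ) (x : EuclideanSpace ℝ (Fin d)),
    ∃ M : Ω → ENNReal, Measurable M ∧
      (∀ᵐ ω ∂P, ∀ p : Option (Fin d) → ℝ, (∀ i, 0 ≤ p i) → (∀ i, p i < 1) →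
        ENNReal.ofReal (Real.exp (κ * (X (n + p none) (cy n x p) ω - X n x ω))) ≤ M ω) ∧
      ∫⁻ ω, ENNReal.ofReal (Real.exp (Real.sqrt (2 * d) * X n x ω - d * n)) * M ω ∂P ≤ ENNReal.ofReal C := by
  obtain ⟨B, hB⟩ := h.edge κ hκ
  obtain ⟨S, hS⟩ := ww_sum2
  set K : ℝ := (d + 2) * Real.log 2 with hK
  have hK0 : 0 ≤ K := mul_nonneg (by positivity) (Real.log_nonneg (by norm_num))
  refine ⟨Real.exp (K * S) * (1 + 2 ^ (d + 2) * Real.exp B), by positivity, fun n x => ?_⟩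
  set F : Ω → (Option (Fin d) → ℝ) → ℝ := fun ω p => κ * X (n + p none) (cy n x p) ω with hF
  have hmX := h.hXmeas
  have hmE : ∀ m (g : Option (Fin d) → Fin (2 ^ (m + 1))), Measurable (fun ω =>
      ENNReal.ofReal (Real.exp ((F ω (dyU m g) - F ω (dyL m g)) / ww m))) := by
    intro m g
    have m1 := hmX (n + dyU m g none) (cy n x (dyU m g))
    have m2 := hmX (n + dyL m g none) (cy n x (dyL m g))
    simp only [hF]
    fun_prop
  have hmG : Measurable (fun ω => chainG K ww (F ω)) := by
    unfold chainG
    exact Measurable.tsum fun m => (Finset.measurable_sum _ fun g _ => hmE m g).const_mul _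
  have hm0 : Measurable (fun ω => ENNReal.ofReal (Real.exp (Real.sqrt (2 * d) * X n x ω - d * n))) := by
    have := hmX n x
    fun_prop
  refine ⟨fun ω => ENNReal.ofReal (Real.exp (K * S)) * (1 + chainG K ww (F ω)),
    (hmG.const_add 1).const_mul _, ?_, ?_⟩
  · filter_upwards [h.hXcont] with ω hω p hp0 hp1
    have hc : Continuous (F ω) := by
      have : Continuous (fun p : Option (Fin d) → ℝ => ((n:ℝ) + p none, cy n x p)) := by
        unfold cy
        fun_prop
      exact (hω.comp this).const_smul κ
    have := chaining K S hK0 ww ww_pos ww_sum1 hS (F ω) hc p hp0 hp1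
    convert this using 4
    simp only [hF]
    have e : cy n x 0 = x := by
      unfold cy
      have : (WithLp.toLp 2 (fun i : Fin d => (0 : Option (Fin d) → ℝ) (some i)) : EuclideanSpace ℝ (Fin d)) = 0 := by
        ext i; simp
      rw [this]; simp
    rw [e]
    simp
    ring
  · have e1 : ∀ ω, ENNReal.ofReal (Real.exp (Real.sqrt (2 * d) * X n x ω - d * n)) *
        (ENNReal.ofReal (Real.exp (K * S)) * (1 + chainG K ww (F ω))) =
        ENNReal.ofReal (Real.exp (K * S)) * (ENNReal.ofReal (Real.exp (Real.sqrt (2 * d) * X n x ω - d * n))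
          + ∑' m : ℕ, ∑ g : Option (Fin d) → Fin (2 ^ (m + 1)), ENNReal.ofReal (Real.exp (-(K * m))) *
            (ENNReal.ofReal (Real.exp (Real.sqrt (2 * d) * X n x ω - d * n)) *
            ENNReal.ofReal (Real.exp ((F ω (dyU m g) - F ω (dyL m g)) / ww m)))) := by
      intro ω
      unfold chainG
      rw [mul_left_comm, mul_add, mul_one, ← ENNReal.tsum_mul_left]
      congr 3
      ext m
      rw [mul_left_comm, Finset.mul_sum, Finset.mul_sum]
    simp_rw [e1]
    have hmEE : ∀ (m : ℕ) (g : Option (Fin d) → Fin (2 ^ (m + 1))), Measurable fun ω =>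
        ENNReal.ofReal (Real.exp (-(K * m))) *
            (ENNReal.ofReal (Real.exp (Real.sqrt (2 * d) * X n x ω - d * n)) *
            ENNReal.ofReal (Real.exp ((F ω (dyU m g) - F ω (dyL m g)) / ww m))) :=
      fun m g => (hm0.mul (hmE m g)).const_mul _
    have hmS : ∀ m : ℕ, Measurable fun ω => ∑ g : Option (Fin d) → Fin (2 ^ (m + 1)), ENNReal.ofReal (Real.exp (-(K * m))) *
            (ENNReal.ofReal (Real.exp (Real.sqrt (2 * d) * X n x ω - d * n)) *
            ENNReal.ofReal (Real.exp ((F ω (dyU m g) - F ω (dyL m g)) / ww m))) :=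
      fun m => Finset.measurable_sum _ fun g _ => hmEE m g
    rw [lintegral_const_mul' _ _ ENNReal.ofReal_ne_top,
      lintegral_add_left hm0, lintegral_tsum fun m => (hmS m).aemeasurable]
    rw [ENNReal.ofReal_mul (Real.exp_nonneg _)]
    gcongr
    rw [ENNReal.ofReal_add (by norm_num) (by positivity), ENNReal.ofReal_one]
    gcongr
    · have hY : (fun ω => Real.sqrt (2 * d) * X n x ω) ∈ gsp X := (gsp X).smul_mem _ (gsp_mem X n x)
      have hl2 : Real.sqrt (2 * d) ^ 2 = 2 * d := Real.sq_sqrt (by positivity)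
      have e2 : ∀ ω, ENNReal.ofReal (Real.exp (Real.sqrt (2 * d) * X n x ω - d * n)) =
          ENNReal.ofReal (Real.exp (-(d * n))) * ENNReal.ofReal (Real.exp (Real.sqrt (2 * d) * X n x ω)) := by
        intro ω
        rw [← ENNReal.ofReal_mul (Real.exp_nonneg _), ← Real.exp_add]
        congr 2; ring
      simp_rw [e2]
      rw [lintegral_const_mul _ (by have := (h.gauss hY).1; fun_prop), h.lexp hY,
        ← ENNReal.ofReal_mul (Real.exp_nonneg _), ← Real.exp_add]
      have e3 : ∀ ω, Real.sqrt (2 * d) * X n x ω * (Real.sqrt (2 * d) * X n x ω)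
          = 2 * d * (X n x ω * X n x ω) := fun ω => by
            linear_combination (X n x ω * X n x ω) * hl2
      simp_rw [e3]
      rw [integral_const_mul, h.cov n n (by positivity) le_rfl, sub_self, h.K_zero n (by positivity)]
      apply le_of_eq
      rw [← ENNReal.ofReal_one]
      congr 1
      rw [Real.exp_eq_one_iff]
      ring
    · have hbm : ∀ m : ℕ, ∫⁻ ω, ∑ g : Option (Fin d) → Fin (2 ^ (m + 1)), ENNReal.ofReal (Real.exp (-(K * m))) *
            (ENNReal.ofReal (Real.exp (Real.sqrt (2 * d) * X n x ω - d * n)) *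
            ENNReal.ofReal (Real.exp ((F ω (dyU m g) - F ω (dyL m g)) / ww m))) ∂P
            ≤ ENNReal.ofReal (2 ^ (d + 1) * Real.exp B * (1/2:ℝ) ^ m) := by
        intro m
        rw [lintegral_finsetSum _ fun g _ => hmEE m g]
        have : ∀ g ∈ (Finset.univ : Finset (Option (Fin d) → Fin (2 ^ (m + 1)))), ∫⁻ ω, ENNReal.ofReal (Real.exp (-(K * m))) *
            (ENNReal.ofReal (Real.exp (Real.sqrt (2 * d) * X n x ω - d * n)) *
            ENNReal.ofReal (Real.exp ((F ω (dyU m g) - F ω (dyL m g)) / ww m))) ∂P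
            ≤ ENNReal.ofReal (Real.exp (-(K * m)) * Real.exp B) := by
          intro g _
          rw [lintegral_const_mul' _ _ ENNReal.ofReal_ne_top, ENNReal.ofReal_mul (Real.exp_nonneg _)]
          gcongr
          exact hB n x m g
        refine (Finset.sum_le_sum this).trans ?_
        rw [Finset.sum_const, nsmul_eq_mul, Finset.card_univ, Fintype.card_fun, Fintype.card_option,
          Fintype.card_fin, Fintype.card_fin, ← ENNReal.ofReal_natCast, ← ENNReal.ofReal_mul (by positivity)]
        apply ENNReal.ofReal_le_ofReal
        apply le_of_eq
        have e4 : Real.exp (-(K * m)) = ((1/2:ℝ) ^ m) ^ (d + 2) := by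
          rw [← pow_mul, ← Real.exp_log (show (0:ℝ) < 1 / 2 by norm_num), ← Real.exp_nat_mul]
          congr 1
          rw [one_div, Real.log_inv, hK]
          push_cast
          ring
        have e5 : (2:ℝ) ^ m * (1/2:ℝ) ^ m = 1 := by rw [← mul_pow]; norm_num
        rw [e4]
        push_cast
        calc ((2:ℝ) ^ (m + 1)) ^ (d + 1) * (((1/2:ℝ) ^ m) ^ (d + 2) * Real.exp B)
            = ((2:ℝ) ^ m * (1/2:ℝ) ^ m) ^ (d + 1) * (2 ^ (d + 1) * Real.exp B * (1/2:ℝ) ^ m) := by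
              rw [pow_succ 2 m, mul_pow, mul_pow]; ring
          _ = _ := by rw [e5]; simp
      refine (ENNReal.tsum_le_tsum hbm).trans (le_of_eq ?_)
      rw [← ENNReal.ofReal_tsum_of_nonneg (fun m => by positivity) (summable_geometric_two.mul_left _),
        tsum_mul_left, tsum_geometric_two]
      congr 1
      ring

lemma Fld.cell_prob (h : Fld P k X) (κ : ℝ) (hκ : Real.sqrt (2 * d) ≤ κ) : ∃ C : ℝ, 0 ≤ C ∧
    ∀ (n : ℕ) (x : EuclideanSpace ℝ (Fin d)) (b H : ℝ),
    P {ω | ∃ p : Option (Fin d) → ℝ, (∀ i, 0 ≤ p i) ∧ (∀ i, p i < 1) ∧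
      Real.sqrt (2 * d) * n - H ≤ X (n + p none) (cy n x p) ω ∧
      (κ - Real.sqrt (2 * d)) * b ≤ (κ - Real.sqrt (2 * d)) * (X (n + p none) (cy n x p) ω - X n x ω)}
      ≤ ENNReal.ofReal (C * Real.exp (-(d * n) + Real.sqrt (2 * d) * H - (κ - Real.sqrt (2 * d)) * b)) := by
  set l := Real.sqrt (2 * d) with hl
  have hl0 : 0 ≤ l := Real.sqrt_nonneg _
  have hl2 : l ^ 2 = 2 * d := Real.sq_sqrt (by positivity)
  obtain ⟨C, hC0, hC⟩ := h.cell κ (hl0.trans hκ)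
  refine ⟨C, hC0, fun n x b H => ?_⟩
  obtain ⟨M, hM, hMb, hMi⟩ := hC n x
  have hm0 : Measurable (fun ω => ENNReal.ofReal (Real.exp (l * X n x ω - d * n)) * M ω) := by
    have := h.hXmeas n x
    fun_prop
  set ε : ENNReal := ENNReal.ofReal (Real.exp (d * n - l * H + (κ - l) * b)) with hε
  have hmk := mul_meas_ge_le_lintegral (μ := P) hm0 ε
  have hsub : P {ω | ∃ p : Option (Fin d) → ℝ, (∀ i, 0 ≤ p i) ∧ (∀ i, p i < 1) ∧
      l * n - H ≤ X (n + p none) (cy n x p) ω ∧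
      (κ - l) * b ≤ (κ - l) * (X (n + p none) (cy n x p) ω - X n x ω)} ≤
      P {ω | ε ≤ ENNReal.ofReal (Real.exp (l * X n x ω - d * n)) * M ω} := by
    apply measure_mono_ae
    filter_upwards [hMb] with ω hω hω2
    obtain ⟨p, hp0, hp1, h1, h2⟩ := hω2
    show ε ≤ ENNReal.ofReal (Real.exp (l * X n x ω - d * n)) * M ω
    refine le_trans ?_ (mul_le_mul_right (hω p hp0 hp1) _)
    rw [← ENNReal.ofReal_mul (Real.exp_nonneg _), ← Real.exp_add]
    apply ENNReal.ofReal_le_ofReal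
    apply Real.exp_le_exp.2
    nlinarith [mul_le_mul_of_nonneg_left h1 hl0]
  refine hsub.trans ?_
  have e : ENNReal.ofReal (Real.exp (-(d * n) + l * H - (κ - l) * b)) * ε = 1 := by
    rw [hε, ← ENNReal.ofReal_mul (Real.exp_nonneg _), ← Real.exp_add, ← ENNReal.ofReal_one]
    congr 1
    rw [Real.exp_eq_one_iff]; ring
  rw [mul_comm C, ENNReal.ofReal_mul (Real.exp_nonneg _)]
  calc _ = ENNReal.ofReal (Real.exp (-(d * n) + l * H - (κ - l) * b)) *
        (ε * P {ω | ε ≤ ENNReal.ofReal (Real.exp (l * X n x ω - d * n)) * M ω}) := by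
        rw [← mul_assoc, e, one_mul]
    _ ≤ _ := by gcongr; exact hmk.trans hMi
end




/-- grid points -/
def gp {d : ℕ} (n : ℕ) (z : Fin d → ℤ) : EuclideanSpace ℝ (Fin d) :=
  WithLp.toLp 2 (fun i => Real.exp (-(n:ℝ)) * z i)

/-- grid index set -/
def gZ (d n R : ℕ) : Finset (Fin d → ℤ) :=
  Fintype.piFinset (fun _ => Finset.Icc (-(⌈(R:ℝ) * Real.exp n⌉ + 1)) (⌈(R:ℝ) * Real.exp n⌉ + 1))

lemma gZ_card (d n R : ℕ) : ((gZ d n R).card : ℝ) ≤ (2 * R + 5) ^ d * Real.exp (d * n) := by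
  have hN : (0:ℝ) ≤ ⌈(R:ℝ) * Real.exp n⌉ := by
    exact_mod_cast Int.ceil_nonneg (by positivity)
  have hN' : (⌈(R:ℝ) * Real.exp n⌉ : ℝ) ≤ R * Real.exp n + 1 := (Int.ceil_lt_add_one _).le
  have h1 : (1:ℝ) ≤ Real.exp n := Real.one_le_exp (by positivity)
  unfold gZ
  rw [Fintype.card_piFinset]
  simp only [Int.card_Icc, Finset.prod_const, Finset.card_univ, Fintype.card_fin]
  push_cast
  rw [Real.exp_nat_mul, ← mul_pow]
  refine pow_le_pow_left₀ (by positivity) ?_ d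
  have hN2 : (0:ℤ) ≤ ⌈(R:ℝ) * Real.exp n⌉ := Int.ceil_nonneg (by positivity)
  have e : (((⌈(R:ℝ) * Real.exp n⌉ + 1 + 1 - -(⌈(R:ℝ) * Real.exp n⌉ + 1)).toNat : ℕ) : ℝ)
      = 2 * ⌈(R:ℝ) * Real.exp n⌉ + 3 := by
    have : (((⌈(R:ℝ) * Real.exp n⌉ + 1 + 1 - -(⌈(R:ℝ) * Real.exp n⌉ + 1)).toNat : ℤ))
      = 2 * ⌈(R:ℝ) * Real.exp n⌉ + 3 := by
      rw [Int.toNat_of_nonneg (by linarith)]; ring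
    exact_mod_cast this
  rw [e]
  nlinarith

lemma gp_box {d n R : ℕ} {z : Fin d → ℤ} (hz : z ∈ gZ d n R) (i : Fin d) :
    |(gp n z) i| ≤ ((R + 2 : ℕ) : ℝ) := by
  unfold gZ at hz
  have hz' := Finset.mem_Icc.1 ((Fintype.mem_piFinset.1 hz) i)
  have hN' : (⌈(R:ℝ) * Real.exp n⌉ : ℝ) ≤ R * Real.exp n + 1 := (Int.ceil_lt_add_one _).le
  have h1 : (1:ℝ) ≤ Real.exp n := Real.one_le_exp (by positivity)
  have a1 : -((⌈(R:ℝ) * Real.exp n⌉ : ℝ) + 1) ≤ z i := by exact_mod_cast hz'.1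
  have a2 : (z i : ℝ) ≤ (⌈(R:ℝ) * Real.exp n⌉ : ℝ) + 1 := by exact_mod_cast hz'.2
  have h2 : |(z i : ℝ)| ≤ (R + 2) * Real.exp n := abs_le.2 ⟨by nlinarith, by nlinarith⟩
  have e : (gp n z) i = Real.exp (-(n:ℝ)) * z i := rfl
  rw [e, abs_mul, abs_of_pos (Real.exp_pos _), Real.exp_neg, inv_mul_le_iff₀ (Real.exp_pos _)]
  push_cast
  linarith

lemma cover {d : ℕ} (n R : ℕ) (t : ℝ) (ht0 : n ≤ t) (ht1 : t < n + 1) (y : EuclideanSpace ℝ (Fin d))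
    (hy : ∀ i, |y i| ≤ R) : ∃ z ∈ gZ d n R, ∃ p : Option (Fin d) → ℝ,
      (∀ i, 0 ≤ p i) ∧ (∀ i, p i < 1) ∧ t = n + p none ∧ y = cy n (gp n z) p := by
  have hE := Real.exp_pos (n:ℝ)
  refine ⟨fun i => ⌊Real.exp n * y i⌋, ?_, fun o => o.elim (t - n) (fun i => Int.fract (Real.exp n * y i)), ?_, ?_, ?_, ?_⟩
  · unfold gZ
    rw [Fintype.mem_piFinset]
    intro i
    have := abs_le.1 (hy i)
    have hc := Int.le_ceil ((R:ℝ) * Real.exp n)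
    rw [Finset.mem_Icc]
    constructor
    · rw [Int.le_floor]
      push_cast
      nlinarith
    · have h1 := Int.floor_le (Real.exp n * y i)
      have : (⌊Real.exp n * y i⌋ : ℝ) ≤ ((⌈(R:ℝ) * Real.exp n⌉ + 1 : ℤ) : ℝ) := by
        push_cast
        nlinarith
      exact_mod_cast this
  · rintro (_ | i)
    · simpa using ht0
    · exact Int.fract_nonneg _
  · rintro (_ | i)
    · simp; linarith
    · exact Int.fract_lt_one _
  · simp
  · ext i
    show y i = Real.exp (-(n:ℝ)) * ⌊Real.exp n * y i⌋ + Real.exp (-(n:ℝ)) * Int.fract (Real.exp n * y i)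
    rw [← mul_add, Int.floor_add_fract, ← mul_assoc, ← Real.exp_add]
    simp

lemma bc {Ω : Type*} [MeasurableSpace Ω] {P : Measure Ω} (E : ℕ → Set Ω) (f : ℕ → ℝ) (N : ℕ)
    (hf0 : ∀ n, 0 ≤ f n) (hf : Summable f) (hE : ∀ n ≥ N, P (E n) ≤ ENNReal.ofReal (f n)) :
    ∀ᵐ ω ∂P, ∃ n0 : ℕ, ∀ n ≥ n0, ω ∉ E n := by
  have h1 : ∑' n, P {ω | ω ∈ E (n + N)} ≠ ⊤ := by
    have : ∑' n, P {ω | ω ∈ E (n + N)} ≤ ∑' n, ENNReal.ofReal (f (n + N)) :=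
      ENNReal.tsum_le_tsum fun n => hE (n + N) (by omega)
    rw [← ENNReal.ofReal_tsum_of_nonneg (fun n => hf0 _) ((summable_nat_add_iff N).2 hf)] at this
    exact ne_top_of_le_ne_top ENNReal.ofReal_ne_top this
  have h2 := measure_setOf_frequently_eq_zero h1
  have h3 : ∀ᵐ ω ∂P, ¬ ∃ᶠ n in atTop, ω ∈ E (n + N) := by
    rw [ae_iff]
    simp only [not_not]
    exact h2
  filter_upwards [h3] with ω hω
  rw [not_frequently, eventually_atTop] at hω
  obtain ⟨n0, hn0⟩ := hω
  refine ⟨n0 + N, fun n hn => ?_⟩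
  have := hn0 (n - N) (by omega)
  rwa [Nat.sub_add_cancel (by omega)] at this

lemma union_grid {Ω : Type*} [MeasurableSpace Ω] {P : Measure Ω} {d n R : ℕ} (E : (Fin d → ℤ) → Set Ω) (q : ℝ)
    (hq : 0 ≤ q) (hE : ∀ z, P (E z) ≤ ENNReal.ofReal (q * Real.exp (-(d * n)))) :
    P {ω | ∃ z ∈ gZ d n R, ω ∈ E z} ≤ ENNReal.ofReal ((2 * R + 5) ^ d * q) := by
  have e : {ω | ∃ z ∈ gZ d n R, ω ∈ E z} = ⋃ z ∈ gZ d n R, E z := by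
    ext ω
    simp
  rw [e]
  refine (measure_biUnion_finset_le _ _).trans ?_
  refine (Finset.sum_le_sum fun z _ => hE z).trans ?_
  rw [Finset.sum_const, nsmul_eq_mul, ← ENNReal.ofReal_natCast, ← ENNReal.ofReal_mul (by positivity)]
  apply ENNReal.ofReal_le_ofReal
  calc ((gZ d n R).card : ℝ) * (q * Real.exp (-(d * n)))
      ≤ ((2 * R + 5) ^ d * Real.exp (d * n)) * (q * Real.exp (-(d * n))) := by
        gcongr
        exact gZ_card d n R
    _ = (2 * R + 5) ^ d * q * (Real.exp (d * n) * Real.exp (-(d * n))) := by ring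
    _ = _ := by rw [← Real.exp_add]; simp

section
variable {d : ℕ} {Ω : Type*} [MeasurableSpace Ω] {P : Measure Ω} [IsProbabilityMeasure P]
    {k : EuclideanSpace ℝ (Fin d) → ℝ} {X : ℝ → EuclideanSpace ℝ (Fin d) → Ω → ℝ}

lemma Fld.lpos (h : Fld P k X) : 0 < Real.sqrt (2 * d) := by
  have : (1:ℝ) ≤ d := by exact_mod_cast h.hd
  apply Real.sqrt_pos.2; linarith

lemma Fld.cpt (h : Fld P k X) (R : ℕ) : ∀ᵐ ω ∂P, ∀ T : ℝ, ∃ C : ℝ, ∀ t ∈ Set.Icc 0 T,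
    ∀ y : EuclideanSpace ℝ (Fin d), (∀ i, |y i| ≤ R) → X t y ω ≤ C := by
  filter_upwards [h.hXcont] with ω hω T
  have hc : Continuous (fun q : ℝ × (Fin d → ℝ) => X q.1 (WithLp.toLp 2 q.2) ω) :=
    hω.comp (by fun_prop : Continuous (fun q : ℝ × (Fin d → ℝ) => (q.1, (WithLp.toLp 2 q.2 : EuclideanSpace ℝ (Fin d)))))
  have hK : IsCompact ((Set.Icc 0 T) ×ˢ (Set.univ.pi fun _ : Fin d => Set.Icc (-(R:ℝ)) R)) :=
    isCompact_Icc.prod (isCompact_univ_pi fun _ => isCompact_Icc)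
  obtain ⟨C, hC⟩ := hK.bddAbove_image hc.continuousOn
  refine ⟨C, fun t ht y hy => ?_⟩
  exact hC ⟨(t, WithLp.ofLp y), ⟨ht, fun i _ => abs_le.1 (hy i)⟩, rfl⟩

lemma Fld.step1 (h : Fld P k X) (R : ℕ) : ∀ᵐ ω ∂P, ∃ C : ℕ, ∀ n : ℕ, ∀ y : EuclideanSpace ℝ (Fin d),
    (∀ i, |y i| ≤ R) → X n y ω ≤ Real.sqrt (2 * d) * n + 2 / Real.sqrt (2 * d) * Real.log (n + 1) + C := by
  set l := Real.sqrt (2 * d) with hl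
  have hl0 : 0 < l := h.lpos
  obtain ⟨C, hC0, hC⟩ := h.cell_prob l le_rfl
  set E : ℕ → Set Ω := fun n => {ω | ∃ z ∈ gZ d n R, ω ∈ {ω | ∃ p : Option (Fin d) → ℝ, (∀ i, 0 ≤ p i) ∧ (∀ i, p i < 1) ∧
      l * n - (-(2 / l * Real.log (n + 1))) ≤ X (n + p none) (cy n (gp n z) p) ω ∧
      (l - l) * 0 ≤ (l - l) * (X (n + p none) (cy n (gp n z) p) ω - X n (gp n z) ω)}} with hE
  have hb : ∀ n ≥ 0, P (E n) ≤ ENNReal.ofReal ((2 * R + 5) ^ d * (C * ((n + 1 : ℕ) : ℝ) ^ (-2 : ℝ))) := by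
    intro n _
    refine union_grid _ _ (by positivity) fun z => (hC n (gp n z) 0 _).trans (le_of_eq ?_)
    congr 1
    rw [mul_assoc, Real.rpow_def_of_pos (by positivity), ← Real.exp_add]
    congr 2
    push_cast
    rw [← hl]
    field_simp
    ring
  have hsum : Summable (fun n : ℕ => (2 * (R:ℝ) + 5) ^ d * (C * ((n + 1 : ℕ) : ℝ) ^ (-2 : ℝ))) :=
    (((summable_nat_add_iff 1).2 (Real.summable_nat_rpow.2 (by norm_num : (-2:ℝ) < -1))).mul_left C).mul_left _
  filter_upwards [bc E _ 0 (fun n => by positivity) hsum hb, h.cpt R] with ω h1 h2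
  obtain ⟨n0, hn0⟩ := h1
  obtain ⟨B, hB⟩ := h2 n0
  obtain ⟨C', hC'⟩ := exists_nat_ge B
  refine ⟨C', fun n y hy => ?_⟩
  have hlog : 0 ≤ 2 / l * Real.log (n + 1) :=
    mul_nonneg (by positivity) (Real.log_nonneg (by linarith [(Nat.cast_nonneg n : (0:ℝ) ≤ n)]))
  have hln : 0 ≤ l * n := by positivity
  rcases le_total n0 n with hn | hn
  · by_contra hcon
    push Not at hcon
    obtain ⟨z, hz, p, hp0, hp1, hpt, hpy⟩ := cover n R n le_rfl (by linarith) y hy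
    refine hn0 n hn ⟨z, hz, p, hp0, hp1, ?_, ?_⟩
    · rw [← hpt, ← hpy]
      have : (0:ℝ) ≤ C' := by positivity
      linarith
    · simp
  · have := hB n ⟨by positivity, by exact_mod_cast hn⟩ y hy
    linarith

set_option maxHeartbeats 4000000 in
lemma Fld.step2 (h : Fld P k X) (R C : ℕ) (a : ℝ) (ha0 : 0 ≤ a) (ha : a < 1 / 2) :
    ∀ᵐ ω ∂P, ∃ n0 : ℕ, ∀ n ≥ n0, ∀ z ∈ gZ d n R,
      (∀ j : ℕ, j ≤ n → X j (gp n z) ω ≤ Real.sqrt (2 * d) * j + (2 / Real.sqrt (2 * d) * Real.log (n + 1) + C)) →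
      ∀ p : Option (Fin d) → ℝ, (∀ i, 0 ≤ p i) → (∀ i, p i < 1) →
      X (n + p none) (cy n (gp n z) p) ω < Real.sqrt (2 * d) * n - a / Real.sqrt (2 * d) * Real.log (n + 2) := by
  set l := Real.sqrt (2 * d) with hl
  have hl0 : 0 < l := h.lpos
  have hl2 : l ^ 2 = 2 * d := Real.sq_sqrt (by positivity)
  set δ : ℝ := (1 / 2 - a) / 4 with hδ
  have hδ0 : 0 < δ := by rw [hδ]; linarith
  set ε : ℝ := δ / l with hε
  have hε0 : 0 < ε := by positivity
  obtain ⟨Cκ, hCκ0, hCκ⟩ := h.cell_prob (l + 2 / ε) (by have : 0 < 2 / ε := by positivity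
                                                        linarith)
  set c' : ℝ := 1 + 2 / l + a / l + ε with hc'
  have hc'0 : 0 ≤ c' := by positivity
  set η : ℝ := δ / 3 with hη
  have hη0 : 0 < η := by positivity
  set D : ℝ := C + 3 + c' / η with hD
  have hD0 : 0 ≤ D := by positivity
  set σ : ℝ := 3 / 2 - a - 2 * δ with hσ
  have hσ1 : 1 < σ := by rw [hσ, hδ]; linarith
  set E : ℕ → Set Ω := fun n => {ω | ∃ z ∈ gZ d n R, ω ∈ {ω |
      (∀ j : ℕ, j ≤ n → X j (gp n z) ω ≤ l * j + (2 / l * Real.log (n + 1) + C)) ∧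
      ∃ p : Option (Fin d) → ℝ, (∀ i, 0 ≤ p i) ∧ (∀ i, p i < 1) ∧
      l * n - a / l * Real.log (n + 2) ≤ X (n + p none) (cy n (gp n z) p) ω}} with hE
  set Q : ℝ := 1500 * D ^ 3 * 6 + Cκ with hQ
  have hQ0 : 0 ≤ Q := by positivity
  have hb : ∀ n ≥ 3, P (E n) ≤ ENNReal.ofReal ((2 * R + 5) ^ d * (Q * ((n + 2 : ℕ) : ℝ) ^ (-σ))) := by
    intro n hn
    refine union_grid _ _ (by positivity) fun z => ?_
    have hn' : (3:ℝ) ≤ n := by exact_mod_cast hn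
    set x : ℝ := (n:ℝ) + 2 with hx
    have hx1 : 1 ≤ x := by linarith
    have hx0 : 0 < x := by linarith
    set Lg : ℝ := Real.log x with hLg
    have hLg0 : 0 ≤ Lg := Real.log_nonneg hx1
    have hlog1 : Real.log (n + 1) ≤ Lg := Real.log_le_log (by linarith) (by linarith)
    have hlog0 : Real.log n ≤ Lg := Real.log_le_log (by linarith) (by linarith)
    set L : ℝ := C + 3 + c' * Lg with hL
    have hcL : c' * Lg = Lg + 2 / l * Lg + a / l * Lg + ε * Lg := by rw [hc']; ring
    have hp1 : 0 ≤ 2 / l * Lg := by positivity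
    have hp2 : 0 ≤ a / l * Lg := by positivity
    have hp3 : 0 ≤ ε * Lg := by positivity
    have hC0 : (0:ℝ) ≤ C := by positivity
    have hLa : 3 + Real.log n ≤ L := by rw [hL, hcL]; linarith
    have hLb : 2 / l * Real.log (n + 1) + C ≤ L := by
      have : 2 / l * Real.log (n + 1) ≤ 2 / l * Lg := by gcongr
      rw [hL, hcL]; linarith
    have hLc : a / l * Lg + ε * Lg ≤ L := by rw [hL, hcL]; linarith
    have hL0 : 0 ≤ L := by positivity
    have w1 := h.walk (gp n z) n hn l (a / l * Lg + ε * Lg) L hl0.le hLa hLc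
    have w2 := hCκ n (gp n z) (ε * Lg) (a / l * Lg)
    have hxσ : ((n + 2 : ℕ) : ℝ) = x := by push_cast; rfl
    rw [hxσ]
    -- splitting
    have hsub : {ω | (∀ j : ℕ, j ≤ n → X j (gp n z) ω ≤ l * j + (2 / l * Real.log (n + 1) + C)) ∧
      ∃ p : Option (Fin d) → ℝ, (∀ i, 0 ≤ p i) ∧ (∀ i, p i < 1) ∧
      l * n - a / l * Real.log (n + 2) ≤ X (n + p none) (cy n (gp n z) p) ω} ⊆
      {ω | (∀ j : ℕ, j ≤ n → X j (gp n z) ω ≤ l * j + L) ∧ l * n - (a / l * Lg + ε * Lg) ≤ X n (gp n z) ω} ∪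
      {ω | ∃ p : Option (Fin d) → ℝ, (∀ i, 0 ≤ p i) ∧ (∀ i, p i < 1) ∧
      l * n - a / l * Lg ≤ X (n + p none) (cy n (gp n z) p) ω ∧
      (l + 2 / ε - l) * (ε * Lg) ≤ (l + 2 / ε - l) * (X (n + p none) (cy n (gp n z) p) ω - X n (gp n z) ω)} := by
      rintro ω ⟨hω1, p, hp0, hp1, hω2⟩
      by_cases hcase : l * n - (a / l * Lg + ε * Lg) ≤ X n (gp n z) ω
      · left
        exact ⟨fun j hj => (hω1 j hj).trans (by linarith), hcase⟩
      · right
        refine ⟨p, hp0, hp1, hω2, ?_⟩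
        push Not at hcase
        have : 0 < l + 2 / ε - l := by
          have : 0 < 2 / ε := by positivity
          linarith
        refine mul_le_mul_of_nonneg_left ?_ this.le
        have hω2' : l * n - a / l * Lg ≤ X (n + p none) (cy n (gp n z) p) ω := hω2
        linarith
    refine (measure_mono hsub).trans ((measure_union_le _ _).trans ?_)
    have w1' : P {ω | (∀ j : ℕ, j ≤ n → X j (gp n z) ω ≤ l * j + L) ∧ l * n - (a / l * Lg + ε * Lg) ≤ X n (gp n z) ω}
        ≤ ENNReal.ofReal (1500 * D ^ 3 * 6 * x ^ (-σ) * Real.exp (-(d * n))) := by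
      rw [← ofReal_measureReal]
      apply ENNReal.ofReal_le_ofReal
      refine w1.trans ?_
      have hxη : 1 ≤ x ^ η := Real.one_le_rpow hx1 hη0.le
      have hLD : L ≤ D * x ^ η := by
        have h1 : Lg ≤ x ^ η / η := Real.log_le_rpow_div hx0.le hη0
        have h2 : c' * Lg ≤ c' * (x ^ η / η) := by gcongr
        have h3 : (C:ℝ) + 3 ≤ (C + 3) * x ^ η := by nlinarith
        have h4 : D * x ^ η = (C + 3) * x ^ η + c' * (x ^ η / η) := by rw [hD]; ring
        rw [h4, hL]; linarith
      have hL3 : L ^ 3 ≤ D ^ 3 * x ^ δ := by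
        calc L ^ 3 ≤ (D * x ^ η) ^ 3 := pow_le_pow_left₀ hL0 hLD 3
          _ = D ^ 3 * x ^ δ := by
            rw [mul_pow, ← Real.rpow_natCast (x ^ η) 3, ← Real.rpow_mul hx0.le]
            congr 2
            rw [hη]; push_cast; ring
      have hsq : x ^ (3 / 2 : ℝ) ≤ 6 * Real.sqrt n ^ 3 := by
        have e1 : x ^ (3 / 2 : ℝ) = Real.sqrt x ^ 3 := by
          rw [Real.sqrt_eq_rpow, ← Real.rpow_natCast, ← Real.rpow_mul hx0.le]
          norm_num
        have e2 : Real.sqrt x ≤ (9/5) * Real.sqrt n := by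
          rw [Real.sqrt_le_iff]
          refine ⟨by positivity, ?_⟩
          rw [mul_pow, Real.sq_sqrt (by positivity)]
          rw [hx]; linarith
        rw [e1]
        calc Real.sqrt x ^ 3 ≤ ((9/5) * Real.sqrt n) ^ 3 := pow_le_pow_left₀ (Real.sqrt_nonneg _) e2 3
          _ = (729/125) * Real.sqrt n ^ 3 := by rw [mul_pow]; norm_num
          _ ≤ _ := by gcongr; norm_num
      have hsn : 0 < Real.sqrt n ^ 3 := by
        have : (0:ℝ) < n := by linarith
        positivity
      have hxp : 0 < x ^ (3 / 2 : ℝ) := by positivity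
      have hinv : 1 / Real.sqrt n ^ 3 ≤ 6 * x ^ (-(3 / 2) : ℝ) := by
        rw [Real.rpow_neg hx0.le, div_le_iff₀ hsn]
        calc (1:ℝ) = x ^ (3 / 2 : ℝ) * (x ^ (3 / 2 : ℝ))⁻¹ := by field_simp
          _ ≤ (6 * Real.sqrt n ^ 3) * (x ^ (3 / 2 : ℝ))⁻¹ := by gcongr
          _ = _ := by ring
      have hexp : Real.exp (l * (a / l * Lg + ε * Lg) - n * l ^ 2 / 2) = x ^ (a + δ) * Real.exp (-(d * n)) := by
        rw [Real.rpow_def_of_pos hx0, ← Real.exp_add, hl2]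
        congr 1
        rw [hε]
        field_simp
        ring
      rw [hexp]
      have hxx : x ^ (-σ) = x ^ (a + δ) * (x ^ δ * x ^ (-(3 / 2) : ℝ)) := by
        rw [← Real.rpow_add hx0, ← Real.rpow_add hx0]
        congr 1
        rw [hσ]; ring
      calc x ^ (a + δ) * Real.exp (-(d * n)) * (1500 * L ^ 3 / Real.sqrt n ^ 3)
          = x ^ (a + δ) * Real.exp (-(d * n)) * (1500 * L ^ 3 * (1 / Real.sqrt n ^ 3)) := by ring
        _ ≤ x ^ (a + δ) * Real.exp (-(d * n)) * (1500 * (D ^ 3 * x ^ δ) * (6 * x ^ (-(3 / 2) : ℝ))) := by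
          gcongr
        _ = _ := by rw [hxx]; ring
    have w2' : ENNReal.ofReal (Cκ * Real.exp (-(d * n) + l * (a / l * Lg) - (l + 2 / ε - l) * (ε * Lg)))
        ≤ ENNReal.ofReal (Cκ * x ^ (-σ) * Real.exp (-(d * n))) := by
      apply ENNReal.ofReal_le_ofReal
      have e : Real.exp (-(d * n) + l * (a / l * Lg) - (l + 2 / ε - l) * (ε * Lg))
          = x ^ (a - 2) * Real.exp (-(d * n)) := by
        rw [Real.rpow_def_of_pos hx0, ← Real.exp_add]
        congr 1
        field_simp
        ring
      rw [e, mul_assoc]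
      gcongr
      rw [hσ]; linarith
    calc _ ≤ ENNReal.ofReal (1500 * D ^ 3 * 6 * x ^ (-σ) * Real.exp (-(d * n)))
            + ENNReal.ofReal (Cκ * x ^ (-σ) * Real.exp (-(d * n))) := add_le_add w1' (w2.trans w2')
      _ = _ := by
        rw [← ENNReal.ofReal_add (by positivity) (by positivity)]
        congr 1
        rw [hQ]; ring
  have hsum : Summable (fun n : ℕ => (2 * (R:ℝ) + 5) ^ d * (Q * ((n + 2 : ℕ) : ℝ) ^ (-σ))) :=
    (((summable_nat_add_iff 2).2 (Real.summable_nat_rpow.2 (by linarith : -σ < -1))).mul_left Q).mul_left _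
  filter_upwards [bc E _ 3 (fun n => by positivity) hsum hb] with ω h1
  obtain ⟨n0, hn0⟩ := h1
  refine ⟨n0, fun n hn z hz hj p hp0 hp1 => ?_⟩
  by_contra hcon
  push Not at hcon
  exact hn0 n hn ⟨z, hz, hj, p, hp0, hp1, hcon⟩

lemma Fld.final (h : Fld P k X) (a : ℝ) (ha0 : 0 ≤ a) (ha : a < 1 / 2)
    (A : Set (EuclideanSpace ℝ (Fin d))) (hA : Bornology.IsBounded A) :
    ∀ᵐ ω ∂P, ∃ C : ℝ, ∀ t : ℝ, 0 ≤ t → ∀ x ∈ A,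
      X t x ω - Real.sqrt (2 * (d:ℝ)) * t
        + (a / Real.sqrt (2 * (d:ℝ))) * Real.log (t + 1) ≤ C := by
  have hl0 := h.lpos
  obtain ⟨r, hr⟩ := hA.exists_norm_le
  obtain ⟨R, hR⟩ := exists_nat_ge r
  have hbox : ∀ x ∈ A, ∀ i, |x i| ≤ R := fun x hx i =>
    (PiLp.norm_apply_le x i).trans ((hr x hx).trans hR)
  have h2 : ∀ᵐ ω ∂P, ∀ C : ℕ, _ := ae_all_iff.2 fun C => h.step2 R C a ha0 ha
  filter_upwards [h.step1 (R + 2), h2, h.cpt R] with ω hω1 hω2 hω3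
  obtain ⟨C, hC⟩ := hω1
  obtain ⟨n0, hn0⟩ := hω2 C
  obtain ⟨B, hB⟩ := hω3 n0
  set l := Real.sqrt (2 * (d:ℝ)) with hl
  refine ⟨max 0 (B + a / l * Real.log (n0 + 1)), fun t ht x hx => ?_⟩
  have hal : 0 ≤ a / l := by positivity
  rcases le_total t n0 with htn | htn
  · refine le_trans ?_ (le_max_right _ _)
    have b1 := hB t ⟨ht, htn⟩ x (hbox x hx)
    have b2 : a / l * Real.log (t + 1) ≤ a / l * Real.log (n0 + 1) := by
      gcongr
    have b3 : 0 ≤ l * t := by positivity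
    linarith
  · refine le_trans ?_ (le_max_left _ _)
    set n := ⌊t⌋₊ with hn
    have hnt : (n:ℝ) ≤ t := Nat.floor_le ht
    have hnt1 : t < n + 1 := Nat.lt_floor_add_one t
    obtain ⟨z, hz, p, hp0, hp1, hpt, hpy⟩ := cover n R t hnt hnt1 x (hbox x hx)
    have key := hn0 n (Nat.le_floor htn) z hz (fun j hj => by
      have b1 := hC j (gp n z) (gp_box hz)
      have b2 : 2 / l * Real.log (j + 1) ≤ 2 / l * Real.log (n + 1) := by
        have : (j:ℝ) ≤ n := by exact_mod_cast hj
        gcongr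
      linarith) p hp0 hp1
    rw [← hpt, ← hpy] at key
    have b2 : a / l * Real.log (t + 1) ≤ a / l * Real.log (n + 2) :=
      mul_le_mul_of_nonneg_left (Real.log_le_log (by linarith) (by linarith)) (by positivity)
    have b3 : l * n ≤ l * t := by gcongr
    linarith
end

theorem sup_field_linear_bound
    {d : ℕ} (hd : 1 ≤ d)
    {Ω : Type*} [m0 : MeasurableSpace Ω] (P : Measure Ω) [IsProbabilityMeasure P]
    (k : EuclideanSpace ℝ (Fin d) → ℝ)
    (hk1 : ContDiff ℝ 1 k) (hk0 : k 0 = 1) (hkb : ∀ z, |k z| ≤ 1)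
    (hksupp : HasCompactSupport k)
    (hkpd : ∀ (n : ℕ) (z : Fin n → EuclideanSpace ℝ (Fin d)) (c : Fin n → ℝ),
      0 ≤ ∑ i, ∑ j, c i * c j * k (z i - z j))
    (X : ℝ → EuclideanSpace ℝ (Fin d) → Ω → ℝ)
    (hXmeas : ∀ t x, Measurable (X t x))
    (hXgauss : ∀ (n : ℕ) (c : Fin n → ℝ) (t : Fin n → ℝ)
        (x : Fin n → EuclideanSpace ℝ (Fin d)),
      ∃ v : NNReal,
        Measure.map (fun ω => ∑ i, c i * X (t i) (x i) ω) P = gaussianReal 0 v)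
    (hXcent : ∀ t x, ∫ ω, X t x ω ∂P = 0)
    (hXcov : ∀ t, 0 ≤ t → ∀ x y : EuclideanSpace ℝ (Fin d),
      ∫ ω, X t x ω * X t y ω ∂P = ∫ u in Set.Icc (1:ℝ) (Real.exp t), k (u • (x - y)) / u)
    (hXcont : ∀ᵐ ω ∂P, Continuous fun p : ℝ × EuclideanSpace ℝ (Fin d) => X p.1 p.2 ω)
    (hXindep : ∀ s t : ℝ, 0 ≤ s → s < t →
      Indep (⨆ x : EuclideanSpace ℝ (Fin d),
          MeasurableSpace.comap (fun ω => X t x ω - X s x ω) inferInstance)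
        (⨆ u ∈ Set.Icc (0:ℝ) s, ⨆ x : EuclideanSpace ℝ (Fin d),
          MeasurableSpace.comap (X u x) inferInstance) P)
    :
    ∀ a : ℝ, 0 ≤ a → a < 1/2 →
    ∀ A : Set (EuclideanSpace ℝ (Fin d)), IsOpen A → Bornology.IsBounded A →
    ∀ᵐ ω ∂P, ∃ C : ℝ, ∀ t : ℝ, 0 ≤ t → ∀ x ∈ A,
      X t x ω - Real.sqrt (2 * (d:ℝ)) * t
        + (a / Real.sqrt (2 * (d:ℝ))) * Real.log (t + 1) ≤ C := by
  intro a ha0 ha A _ hAb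
  exact (Fld.mk hd hk1 hk0 hksupp hXmeas hXgauss hXcent hXcov hXcont hXindep : Fld P k X).final
    a ha0 ha A hAb
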